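/- 4 ∫_0^1 (1−t) [K(√(1−t))]² K(√t) / (1+t)^{3/2} dt = [Γ(1/8) Γ(3/8)]² / 24. -/

import Mathlib

open Real MeasureTheory intervalIntegral

/-- Complete elliptic integral of the first kind. -/
noncomputable def ellipticK (k : ℝ) : ℝ :=
  ∫ θ in (0:ℝ)..(π/2), 1 / Real.sqrt (1 - k^2 * Real.sin θ ^ 2)

open Set Filter Topology ENNReal

local notation "E" => ENNReal.ofReal

lemma cov {s t : Set ℝ} (hs : MeasurableSet s) (φ φ' ψ : ℝ → ℝ)
    (hd : ∀ x ∈ s, HasDerivAt φ (φ' x) x) (hm : ∀ x ∈ s, φ x ∈ t) (hm' : ∀ y ∈ t, ψ y ∈ s)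
    (hl : ∀ x ∈ s, ψ (φ x) = x) (hr : ∀ y ∈ t, φ (ψ y) = y) (g : ℝ → ENNReal) :
    ∫⁻ y in t, g y = ∫⁻ x in s, E |φ' x| * g (φ x) := by
  have hi : φ '' s = t := by
    ext y; constructor
    · rintro ⟨x, hx, rfl⟩; exact hm x hx
    · intro hy; exact ⟨ψ y, hm' y hy, hr y hy⟩
  rw [← hi]
  refine lintegral_image_eq_lintegral_abs_deriv_mul hs (fun x hx => (hd x hx).hasDerivWithinAt) ?_ g
  intro x hx y hy h
  rw [← hl x hx, ← hl y hy, h]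

lemma div_sqrt_aux {c P Q : ℝ} (hc : 0 < c) (h : P = c ^ 2 * Q) : c / √P = 1 / √Q := by
  rw [h, Real.sqrt_mul (by positivity), Real.sqrt_sq hc.le, div_mul_eq_div_div, div_self hc.ne']

/-- positive cov, real integrands -/
lemma covR {s t : Set ℝ} (hs : MeasurableSet s) (φ φ' ψ : ℝ → ℝ)
    (hd : ∀ x ∈ s, HasDerivAt φ (φ' x) x) (hm : ∀ x ∈ s, φ x ∈ t) (hm' : ∀ y ∈ t, ψ y ∈ s)
    (hl : ∀ x ∈ s, ψ (φ x) = x) (hr : ∀ y ∈ t, φ (ψ y) = y) (g f : ℝ → ℝ)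
    (h : ∀ x ∈ s, |φ' x| * g (φ x) = f x) :
    ∫⁻ y in t, E (g y) = ∫⁻ x in s, E (f x) := by
  rw [cov hs φ φ' ψ hd hm hm' hl hr]
  refine setLIntegral_congr_fun hs fun x hx => ?_
  rw [← ENNReal.ofReal_mul (abs_nonneg _), h x hx]

lemma ofReal_integral_cont {f : ℝ → ℝ} {a b : ℝ} (hab : a ≤ b) (hf : ContinuousOn f (Icc a b))
    (h0 : ∀ x ∈ Icc a b, 0 ≤ f x) :
    E (∫ x in a..b, f x) = ∫⁻ x in Ioo a b, E (f x) := by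
  rw [intervalIntegral.integral_of_le hab, integral_Ioc_eq_integral_Ioo,
    ofReal_integral_eq_lintegral_ofReal]
  · exact (hf.integrableOn_Icc).mono_set Ioo_subset_Icc_self
  · exact (ae_restrict_iff' measurableSet_Ioo).2
      (Eventually.of_forall fun x hx => h0 x (Ioo_subset_Icc_self hx))

lemma oneK_pos {k : ℝ} (hk : k ^ 2 < 1) (θ : ℝ) : 0 < 1 - k ^ 2 * sin θ ^ 2 := by
  have := sin_sq_le_one θ
  nlinarith [sq_nonneg k, sq_nonneg (sin θ)]

lemma K_lint {k : ℝ} (hk : k ^ 2 < 1) :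
    E (ellipticK k) = ∫⁻ θ in Ioo 0 (π/2), E (1 / √(1 - k ^ 2 * sin θ ^ 2)) := by
  unfold ellipticK
  refine ofReal_integral_cont (by positivity) ?_ ?_
  · refine Continuous.continuousOn ?_
    refine continuous_const.div (by fun_prop) fun θ => ?_
    exact (Real.sqrt_pos.2 (oneK_pos hk θ)).ne'
  · intro x _; positivity

noncomputable def Me (a b : ℝ) : ENNReal :=
  ∫⁻ x in Ioi (0:ℝ), E (1 / √((x ^ 2 + a ^ 2) * (x ^ 2 + b ^ 2)))

lemma Me_symm (a b : ℝ) : Me a b = Me b a := by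
  unfold Me; simp_rw [mul_comm]

lemma Me_trig {a b : ℝ} (ha : 0 < a) (hb : 0 < b) :
    Me a b = ∫⁻ θ in Ioo 0 (π/2), E (1 / √(a ^ 2 * cos θ ^ 2 + b ^ 2 * sin θ ^ 2)) := by
  unfold Me
  refine covR measurableSet_Ioo (fun θ => b * tan θ) (fun θ => b * (1 / cos θ ^ 2))
    (fun x => arctan (x / b)) ?_ ?_ ?_ ?_ ?_ _ _ ?_
  · intro θ hθ
    have hc : cos θ ≠ 0 := (cos_pos_of_mem_Ioo ⟨by linarith [hθ.1, pi_pos], hθ.2⟩).ne'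
    exact (hasDerivAt_tan hc).const_mul b
  · intro θ hθ
    exact mul_pos hb (tan_pos_of_pos_of_lt_pi_div_two hθ.1 hθ.2)
  · intro x hx
    have hx : 0 < x := hx
    exact ⟨by simpa using arctan_strictMono (div_pos hx hb), arctan_lt_pi_div_two _⟩
  · intro θ hθ
    have : b * tan θ / b = tan θ := by field_simp
    simp only [this]
    exact arctan_tan (by linarith [hθ.1, pi_pos]) hθ.2
  · intro x hx
    simp only [tan_arctan]; field_simp
  · intro θ hθ
    have hc : 0 < cos θ := (cos_pos_of_mem_Ioo ⟨by linarith [hθ.1, pi_pos], hθ.2⟩)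
    rw [abs_of_pos (by positivity), mul_one_div]
    refine div_sqrt_aux (by positivity) ?_
    rw [tan_eq_sin_div_cos]
    have := sin_sq_add_cos_sq θ
    field_simp
    linear_combination (a^2 * cos θ^2 + b^2*sin θ^2) * this

lemma K_Me {k : ℝ} (hk : k ^ 2 < 1) : E (ellipticK k) = Me 1 (√(1 - k ^ 2)) := by
  rw [K_lint hk, Me_trig one_pos (Real.sqrt_pos.2 (by linarith))]
  congr 1; ext θ
  rw [Real.sq_sqrt (by linarith), cos_sq']; ring_nf

lemma Me_homog {a b c : ℝ} (hc : 0 < c) : Me (c * a) (c * b) = E (1 / c) * Me a b := by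
  unfold Me
  rw [← lintegral_const_mul' _ _ ENNReal.ofReal_ne_top]
  simp_rw [← ENNReal.ofReal_mul (show 0 ≤ 1 / c by positivity)]
  refine covR measurableSet_Ioi (fun x => c * x) (fun _ => c) (fun y => y / c) ?_ ?_ ?_ ?_ ?_ _ _ ?_
  · intro x _; simpa using (hasDerivAt_id x).const_mul c
  · intro x hx; exact mul_pos hc hx
  · intro x hx; exact div_pos hx hc
  · intro x _; field_simp
  · intro x _; field_simp
  · intro x hx
    rw [abs_of_pos hc, show ((c * x) ^ 2 + (c * a) ^ 2) * ((c * x) ^ 2 + (c * b) ^ 2)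
      = (c ^ 2) ^ 2 * ((x ^ 2 + a ^ 2) * (x ^ 2 + b ^ 2)) by ring, Real.sqrt_mul (by positivity),
      Real.sqrt_sq (by positivity)]
    field_simp

lemma lint_even {f : ℝ → ENNReal} (hf : ∀ x, f (-x) = f x) :
    ∫⁻ x, f x = 2 * ∫⁻ x in Ioi 0, f x := by
  have h1 : ∫⁻ x in Iio 0, f x = ∫⁻ x in Ioi 0, f x := by
    rw [cov (s := Ioi 0) (t := Iio 0) measurableSet_Ioi (fun x => -x) (fun _ => -1) (fun x => -x)]
    · simp [hf]
    · intro x _; exact (hasDerivAt_id x).neg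
    · intro x hx; simpa using hx
    · intro x hx; simpa using hx
    · simp
    · simp
  rw [← lintegral_add_compl f (measurableSet_Ioi (a := (0:ℝ))), compl_Ioi,
    setLIntegral_congr Iio_ae_eq_Iic.symm, h1, two_mul]

lemma Me_gauss {a b : ℝ} (ha : 0 < a) (hb : 0 < b) : Me (√(a * b)) ((a + b) / 2) = Me a b := by
  have hab : 0 < a * b := mul_pos ha hb
  have h1 : 2 * Me (√(a * b)) ((a + b) / 2) = 2 * Me a b := by
    unfold Me
    rw [← lint_even (f := fun x => E (1 / √((x ^ 2 + √(a * b) ^ 2) * (x ^ 2 + ((a + b) / 2) ^ 2))))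
      (by intro x; simp), ← lintegral_const_mul' _ _ (by simp), ← setLIntegral_univ]
    rw [show (2:ENNReal) = E 2 by simp]
    simp_rw [← ENNReal.ofReal_mul (show (0:ℝ) ≤ 2 by positivity)]
    have key : ∀ x : ℝ, 0 < x + √(x ^ 2 + a * b) := by
      intro x
      have : |x| < √(x ^ 2 + a * b) := by
        rw [← Real.sqrt_sq_eq_abs]; exact Real.sqrt_lt_sqrt (sq_nonneg x) (by linarith)
      linarith [neg_abs_le x]
    refine covR measurableSet_Ioi (fun v => (v - a * b / v) / 2) (fun v => (1 + a * b / v ^ 2) / 2)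
      (fun x => x + √(x ^ 2 + a * b)) ?_ ?_ ?_ ?_ ?_ _ _ ?_
    · intro v hv
      have hv : v ≠ 0 := ne_of_gt hv
      refine (((hasDerivAt_id v).fun_sub ((hasDerivAt_inv hv).const_mul (a * b))).div_const 2).congr_deriv ?_
      field_simp; ring
    · intro _ _; trivial
    · intro x _; exact key x
    · intro v hv
      have hv : 0 < v := hv
      rw [show ((v - a * b / v) / 2) ^ 2 + a * b = ((v + a * b / v) / 2) ^ 2 by field_simp; ring,
        Real.sqrt_sq (by positivity)]
      ring
    · intro x _
      have := key x
      field_simp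
      have h2 := Real.sq_sqrt (show 0 ≤ x ^ 2 + a * b by positivity)
      linear_combination h2
    · intro v hv
      have hv : 0 < v := hv
      rw [abs_of_pos (by positivity), Real.sq_sqrt hab.le,
        show (((v - a * b / v) / 2) ^ 2 + a * b) * (((v - a * b / v) / 2) ^ 2 + ((a + b) / 2) ^ 2)
        = ((1 + a * b / v ^ 2) / 4) ^ 2 * ((v ^ 2 + a ^ 2) * (v ^ 2 + b ^ 2)) by field_simp; ring,
        Real.sqrt_mul (by positivity), Real.sqrt_sq (by positivity)]
      field_simp
      norm_num
  exact (ENNReal.mul_right_inj (by simp) (by simp)).1 h1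

lemma Me_one {h : ℝ} (h0 : 0 < h) (h1 : h < 1) :
    Me 1 h = ∫⁻ X in Ioo h 1, E (1 / √((1 - X ^ 2) * (X ^ 2 - h ^ 2))) := by
  unfold Me
  have hh : 0 < 1 - h ^ 2 := by nlinarith
  have hp : ∀ X ∈ Ioo h 1, 0 < X ∧ 0 < 1 - X ^ 2 ∧ 0 < X ^ 2 - h ^ 2 := fun X hX =>
    ⟨by linarith [hX.1], by nlinarith [hX.1, hX.2], by nlinarith [hX.1, hX.2]⟩
  refine covR measurableSet_Ioo (fun X => √((X ^ 2 - h ^ 2) / (1 - X ^ 2)))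
    (fun X => X * (1 - h ^ 2) / (1 - X ^ 2) ^ 2 / √((X ^ 2 - h ^ 2) / (1 - X ^ 2)))
    (fun x => √((x ^ 2 + h ^ 2) / (x ^ 2 + 1))) ?_ ?_ ?_ ?_ ?_ _ _ ?_
  · intro X hX
    obtain ⟨a, b, c⟩ := hp X hX
    refine ((((hasDerivAt_pow 2 X).sub_const (h ^ 2)).fun_div
      ((hasDerivAt_pow 2 X).const_sub 1) b.ne').sqrt (div_pos c b).ne').congr_deriv ?_
    have h2 : √((X ^ 2 - h ^ 2) / (1 - X ^ 2)) ≠ 0 := (Real.sqrt_pos.2 (div_pos c b)).ne'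
    field_simp
    push_cast
    ring
  · intro X hX
    obtain ⟨a, b, c⟩ := hp X hX
    exact Real.sqrt_pos.2 (div_pos c b)
  · intro x hx
    have hx : 0 < x := hx
    constructor
    · apply Real.lt_sqrt_of_sq_lt
      rw [lt_div_iff₀ (by positivity)]; nlinarith [mul_pos (pow_pos hx 2) hh]
    · rw [Real.sqrt_lt' one_pos, div_lt_iff₀ (by positivity)]; nlinarith
  · intro X hX
    obtain ⟨a, b, c⟩ := hp X hX
    rw [Real.sq_sqrt (div_pos c b).le, show ((X ^ 2 - h ^ 2) / (1 - X ^ 2) + h ^ 2) /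
      ((X ^ 2 - h ^ 2) / (1 - X ^ 2) + 1) = X ^ 2 by
        rw [div_add' _ _ _ b.ne', div_add' _ _ _ b.ne', div_div_div_cancel_right₀ b.ne', 
          div_eq_iff (by nlinarith)]; ring]
    exact Real.sqrt_sq a.le
  · intro x hx
    have hx : 0 < x := hx
    rw [Real.sq_sqrt (by positivity), show ((x ^ 2 + h ^ 2) / (x ^ 2 + 1) - h ^ 2) /
      (1 - (x ^ 2 + h ^ 2) / (x ^ 2 + 1)) = x ^ 2 by
        have : x ^ 2 + 1 ≠ 0 := by positivity
        rw [div_sub' this, sub_div' this, div_div_div_cancel_right₀ this,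
          div_eq_iff (by nlinarith)]; ring]
    exact Real.sqrt_sq hx.le
  · intro X hX
    obtain ⟨a, b, c⟩ := hp X hX
    rw [abs_of_pos (by positivity), mul_one_div, Real.sq_sqrt (by positivity), div_div, ← Real.sqrt_mul (by positivity)]
    refine div_sqrt_aux (by positivity) ?_
    field_simp
    ring

noncomputable def yS (x σ : ℝ) : ℝ := 1 + 2 * σ ^ 4 * x + σ ^ 8

noncomputable def yf (x : ℝ) : ℝ := ∫ σ in (0:ℝ)..1, 4 * (1 + σ ^ 2) / √(yS x σ)

lemma yS_pos {x : ℝ} (hx : -1 < x) (σ : ℝ) : 0 < yS x σ := by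
  unfold yS
  by_cases h : σ = 0
  · subst h; norm_num
  · have : 0 < σ ^ 4 := by positivity
    nlinarith [sq_nonneg (1 - σ ^ 4), mul_pos this (show 0 < 1 + x by linarith)]

lemma yf_nonneg (x : ℝ) : 0 ≤ yf x :=
  intervalIntegral.integral_nonneg (by norm_num) fun σ _ => by positivity

lemma y_lint {x : ℝ} (hx : -1 < x) :
    E (yf x) = ∫⁻ σ in Ioo 0 1, E (4 * (1 + σ ^ 2) / √(yS x σ)) := by
  unfold yf
  refine ofReal_integral_cont (by norm_num) ?_ ?_
  · refine Continuous.continuousOn ?_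
    refine Continuous.div (by fun_prop) (by unfold yS; fun_prop) fun σ => ?_
    exact (Real.sqrt_pos.2 (yS_pos hx σ)).ne'
  · intro x _; positivity

lemma y_Me {z : ℝ} (h0 : 0 ≤ z) (h1 : z < 1) :
    E (yf (1 - 2 * z ^ 2)) = E (2 * √2) * Me (√(1 + z)) (√(1 - z)) := by
  have hx : -1 < 1 - 2 * z ^ 2 := by nlinarith
  have hq : ∀ V : ℝ, (V^2 + √(2 + 2*z)^2) * (V^2 + √(2 - 2*z)^2) = (V^2+2)^2 - 4*z^2 := by
    intro V
    rw [Real.sq_sqrt (by linarith), Real.sq_sqrt (by linarith)]; ring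
  have e1 : E (2 * √2) * Me (√(1 + z)) (√(1 - z)) = E 4 * Me (√(2 + 2*z)) (√(2 - 2*z)) := by
    rw [show (2 + 2 * z) = 2 * (1 + z) by ring, show (2 - 2 * z) = 2 * (1 - z) by ring,
      Real.sqrt_mul (by norm_num), Real.sqrt_mul (by norm_num), Me_homog (by positivity), ← mul_assoc,
      ← ENNReal.ofReal_mul (by positivity)]
    congr 2
    have := Real.mul_self_sqrt (show (0:ℝ) ≤ 2 by norm_num)
    field_simp
    linarith
  rw [y_lint hx, e1]
  unfold Me
  simp_rw [hq]
  rw [← lintegral_const_mul' _ _ ENNReal.ofReal_ne_top]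
  simp_rw [← ENNReal.ofReal_mul (show (0:ℝ) ≤ 4 by positivity)]
  have key : ∀ V : ℝ, 0 < V → V < √(V ^ 2 + 4) ∧ √(V^2+4) < V + 2 := by
    intro V hV
    refine ⟨Real.lt_sqrt_of_sq_lt (by linarith), ?_⟩
    rw [Real.sqrt_lt' (by linarith)]; nlinarith
  symm
  refine covR measurableSet_Ioo (fun σ => 1 / σ - σ) (fun σ => -(1 / σ ^ 2) - 1)
    (fun V => (√(V ^ 2 + 4) - V) / 2) ?_ ?_ ?_ ?_ ?_ _ _ ?_
  · intro σ hσ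
    have h := ne_of_gt hσ.1
    have := (hasDerivAt_inv h).fun_sub (hasDerivAt_id σ)
    simpa [one_div] using this
  · intro σ hσ
    have : 1 < 1 / σ := by rw [lt_div_iff₀ hσ.1]; linarith [hσ.2]
    show 0 < 1 / σ - σ
    linarith [hσ.2]
  · intro V hV
    have := key V hV
    constructor <;> linarith
  · intro σ hσ
    have h := hσ.1
    rw [show (1 / σ - σ) ^ 2 + 4 = (1 / σ + σ) ^ 2 by field_simp; ring, Real.sqrt_sq (by positivity)]
    ring
  · intro V hV
    have := key V hV
    have h3 : √(V ^ 2 + 4) - V ≠ 0 := by linarith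
    have h2 := Real.sq_sqrt (show 0 ≤ V ^ 2 + 4 by positivity)
    field_simp
    linear_combination -h2
  · intro σ hσ
    have h := hσ.1
    rw [abs_of_neg (by have : 0 < 1 / σ^2 := by positivity
                       linarith), show yS (1 - 2 * z ^ 2) σ = (σ^2)^2 * (((1 / σ - σ) ^ 2 + 2) ^ 2 - 4 * z ^ 2) by
                        unfold yS; field_simp; ring, Real.sqrt_mul (by positivity), Real.sqrt_sq (by positivity)]
    field_simp
    ring

lemma K_nonneg (k : ℝ) : 0 ≤ ellipticK k :=
  intervalIntegral.integral_nonneg (by positivity) fun σ _ => by positivity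

lemma E_inj {a b : ℝ} (ha : 0 ≤ a) (hb : 0 ≤ b) (h : E a = E b) : a = b :=
  (ENNReal.ofReal_eq_ofReal_iff ha hb).1 h

lemma y_A1 {t : ℝ} (h0 : 0 < t) (h1 : t < 1) :
    yf (1 - 2 * ((1 - t) / (1 + t)) ^ 2) = 2 * √(1 + t) * ellipticK (√(1 - t)) := by
  refine E_inj (yf_nonneg _) (mul_nonneg (by positivity) (K_nonneg _)) ?_
  rw [y_Me (div_nonneg (by linarith) (by linarith)) (by rw [div_lt_one (by linarith)]; linarith),
    ENNReal.ofReal_mul (p := _) (q := ellipticK _) (by positivity), K_Me (by rw [Real.sq_sqrt (by linarith)]; linarith),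
    Real.sq_sqrt (by linarith)]
  have h3 : 0 < 1 + t := by linarith
  rw [show 1 + (1 - t) / (1 + t) = 2 / (1 + t) by field_simp; ring,
    show 1 - (1 - t) / (1 + t) = 2 / (1 + t) * t by field_simp; ring, Real.sqrt_mul (by positivity)]
  rw [show Me √(2 / (1 + t)) (√(2 / (1 + t)) * √t) = Me (√(2 / (1 + t)) * 1) (√(2 / (1 + t)) * √t) by simp,
    Me_homog (by positivity), ← mul_assoc, ← ENNReal.ofReal_mul (by positivity),
    show 1 - (1 - t) = t by ring]
  congr 2
  rw [Real.sqrt_div (by norm_num)]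
  field_simp

lemma y_A2 {t : ℝ} (h0 : 0 < t) (h1 : t < 1) :
    yf (-(1 - 2 * ((1 - t) / (1 + t)) ^ 2)) = 2 * √2 * √(1 + t) * ellipticK (√t) := by
  refine E_inj (yf_nonneg _) (mul_nonneg (by positivity) (K_nonneg _)) ?_
  have h3 : 0 < 1 + t := by linarith
  have hs : 0 < √t := Real.sqrt_pos.2 h0
  have hs1 : √t < 1 := by rw [Real.sqrt_lt' one_pos]; linarith
  have hs2 := Real.sq_sqrt h0.le
  rw [show -(1 - 2 * ((1 - t) / (1 + t)) ^ 2) = 1 - 2 * (2 * √t / (1 + t)) ^ 2 by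
      field_simp; rw [hs2]; ring,
    y_Me (by positivity) (by rw [div_lt_one h3]; nlinarith [sq_nonneg (1 - √t)]),
    ENNReal.ofReal_mul (p := _) (q := ellipticK _) (by positivity), K_Me (by rw [hs2]; exact h1), hs2,
    show 1 + 2 * √t / (1 + t) = (1 + √t)^2 / (1 + t) by field_simp; linear_combination -hs2,
    show 1 - 2 * √t / (1 + t) = (1 - √t)^2 / (1 + t) by field_simp; linear_combination -hs2,
    Real.sqrt_div (by positivity), Real.sqrt_div (by positivity), Real.sqrt_sq (by linarith),
    Real.sqrt_sq (by linarith), div_eq_inv_mul, div_eq_inv_mul, Me_homog (by positivity),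
    ← Me_gauss (by linarith) (by linarith), show (1 + √t) * (1 - √t) = 1 - t by linear_combination -hs2,
    show (1 + √t + (1 - √t)) / 2 = 1 by ring, Me_symm, ← mul_assoc, ← ENNReal.ofReal_mul (by positivity)]
  congr 2
  field_simp

lemma partA : ∫⁻ x in Ioo (-1:ℝ) 1, E (yf x ^ 2 * yf (-x)) = E (16 * √2) *
    ∫⁻ t in Ioo (0:ℝ) 1, E (4 * ((1-t) * (ellipticK (√(1-t)))^2 * ellipticK (√t)
          / (1+t) ^ ((3:ℝ)/2))) := by
  rw [← lintegral_const_mul' _ _ ENNReal.ofReal_ne_top]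
  simp_rw [← ENNReal.ofReal_mul (show 0 ≤ 16 * √2 by positivity)]
  refine covR measurableSet_Ioo (fun t => 1 - 2 * ((1 - t) / (1 + t)) ^ 2)
    (fun t => 8 * (1 - t) / (1 + t) ^ 3) (fun x => (1 - √((1 - x) / 2)) / (1 + √((1 - x) / 2)))
    ?_ ?_ ?_ ?_ ?_ _ _ ?_
  · intro t ht
    have h3 : 1 + t ≠ 0 := by linarith [ht.1]
    refine ((((((hasDerivAt_id t).const_sub 1).fun_div ((hasDerivAt_id t).const_add 1) h3).fun_pow
      2).const_mul 2).const_sub 1).congr_deriv ?_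
    simp only [id]
    field_simp
    push_cast
    field_simp
    ring
  · intro t ht
    have h3 : 0 < 1 + t := by linarith [ht.1]
    have h4 : (1 - t) / (1 + t) < 1 := by rw [div_lt_one h3]; linarith [ht.1]
    have h5 : 0 < (1 - t) / (1 + t) := div_pos (by linarith [ht.2]) h3
    constructor <;> nlinarith
  · intro x hx
    have h1 : 0 < √((1 - x) / 2) := Real.sqrt_pos.2 (by linarith [hx.2])
    have h2 : √((1 - x) / 2) < 1 := by rw [Real.sqrt_lt' one_pos]; linarith [hx.1]
    exact ⟨div_pos (by linarith) (by linarith), by rw [div_lt_one (by linarith)]; linarith⟩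
  · intro t ht
    have h3 : 0 < 1 + t := by linarith [ht.1]
    have h5 : 0 < (1 - t) / (1 + t) := div_pos (by linarith [ht.2]) h3
    rw [show (1 - (1 - 2 * ((1 - t) / (1 + t)) ^ 2)) / 2 = ((1 - t) / (1 + t)) ^ 2 by ring,
      Real.sqrt_sq h5.le]
    rw [show 1 + (1 - t) / (1 + t) = 2 / (1 + t) by field_simp; ring]
    field_simp
    ring
  · intro x hx
    have h1 : 0 < √((1 - x) / 2) := Real.sqrt_pos.2 (by linarith [hx.2])
    have h2 := Real.sq_sqrt (show 0 ≤ (1 - x) / 2 by linarith [hx.2])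
    set s := √((1 - x) / 2)
    rw [show 1 - (1 - s) / (1 + s) = 2 * s / (1 + s) by field_simp; ring,
      show 1 + (1 - s) / (1 + s) = 2 / (1 + s) by field_simp; ring]
    field_simp
    linarith
  · intro t ht
    have h3 : 0 < 1 + t := by linarith [ht.1]
    rw [y_A1 ht.1 ht.2, y_A2 ht.1 ht.2, abs_of_nonneg (div_nonneg (by linarith [ht.2]) (by positivity)),
      show (3:ℝ)/2 = 1 + 1/2 by norm_num, Real.rpow_add h3, Real.rpow_one, ← Real.sqrt_eq_rpow]
    have h4 := Real.sq_sqrt h3.le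
    have h5 : √(1+t) ≠ 0 := by positivity
    have h6 : √(1+t) ^ 4 = (1+t)^2 := by rw [show √(1+t)^4 = (√(1+t)^2)^2 by ring, h4]
    field_simp
    rw [h6]
    ring

lemma Me_meas {f g : ℝ → ℝ} (hf : Measurable f) (hg : Measurable g) :
    Measurable fun x => Me (f x) (g x) := by
  unfold Me
  refine Measurable.lintegral_prod_right (f := fun x v : ℝ => E (1 / √((v ^ 2 + f x ^ 2) * (v ^ 2 + g x ^ 2)))) ?_
  unfold Function.uncurry
  fun_prop

lemma lint_swap {s t : Set ℝ} (f : ℝ → ℝ → ENNReal) (hf : Measurable (Function.uncurry f)) :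
    ∫⁻ x in s, ∫⁻ y in t, f x y = ∫⁻ y in t, ∫⁻ x in s, f x y :=
  lintegral_lintegral_swap hf.aemeasurable

lemma lint_tri (g : ℝ → ℝ → ENNReal) (hg : Measurable (Function.uncurry g)) :
    ∫⁻ x in Ioo (0:ℝ) 1, ∫⁻ y in Ioo 0 x, g x y = ∫⁻ y in Ioo (0:ℝ) 1, ∫⁻ x in Ioo y 1, g x y := by
  have h1 : ∀ x ∈ Ioo (0:ℝ) 1, ∫⁻ y in Ioo 0 x, g x y =
      ∫⁻ y in Ioo (0:ℝ) 1, {p : ℝ × ℝ | p.2 < p.1}.indicator (Function.uncurry g) (x, y) := by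
    intro x hx
    rw [show (fun y => {p : ℝ × ℝ | p.2 < p.1}.indicator (Function.uncurry g) (x, y)) =
      (Iio x).indicator (g x) from by ext y; simp [indicator, Function.uncurry],
      setLIntegral_indicator measurableSet_Iio]
    congr 2
    ext y; simp only [mem_Ioo, mem_inter_iff, mem_Iio]
    constructor
    · rintro ⟨a, b⟩; exact ⟨b, a, by linarith [hx.2]⟩
    · rintro ⟨a, b, c⟩; exact ⟨b, a⟩
  have h2 : ∀ y ∈ Ioo (0:ℝ) 1, ∫⁻ x in Ioo y 1, g x y =
      ∫⁻ x in Ioo (0:ℝ) 1, {p : ℝ × ℝ | p.2 < p.1}.indicator (Function.uncurry g) (x, y) := by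
    intro y hy
    rw [show (fun x => {p : ℝ × ℝ | p.2 < p.1}.indicator (Function.uncurry g) (x, y)) =
      (Ioi y).indicator (fun x => g x y) from by ext x; simp [indicator, Function.uncurry],
      setLIntegral_indicator measurableSet_Ioi]
    congr 2
    ext x; simp only [mem_Ioo, mem_inter_iff, mem_Ioi]
    constructor
    · rintro ⟨a, b⟩; exact ⟨a, by linarith [hy.1], b⟩
    · rintro ⟨a, b, c⟩; exact ⟨a, c⟩
  rw [setLIntegral_congr_fun measurableSet_Ioo h1, setLIntegral_congr_fun measurableSet_Ioo h2]
  refine lint_swap (fun x y => {p : ℝ × ℝ | p.2 < p.1}.indicator (Function.uncurry g) (x, y)) ?_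
  exact hg.indicator (measurableSet_lt measurable_snd measurable_fst)

lemma lint_scale {ξ : ℝ} (hξ : 0 < ξ) (g f : ℝ → ℝ) (h : ∀ s ∈ Ioo (0:ℝ) 1, ξ * g (ξ * s) = f s) :
    ∫⁻ w in Ioo 0 ξ, E (g w) = ∫⁻ s in Ioo (0:ℝ) 1, E (f s) := by
  refine covR measurableSet_Ioo (fun s => ξ * s) (fun _ => ξ) (fun w => w / ξ) ?_ ?_ ?_ ?_ ?_ _ _ ?_
  · intro x _; simpa using (hasDerivAt_id x).const_mul ξ
  · intro x hx; exact ⟨mul_pos hξ hx.1, by nlinarith [hx.2]⟩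
  · intro x hx; exact ⟨div_pos hx.1 hξ, by rw [div_lt_one hξ]; exact hx.2⟩
  · intro x _; field_simp
  · intro x _; field_simp
  · intro s hs; rw [abs_of_pos hξ]; exact h s hs

lemma beta_lint (n : ℕ) {α : ℝ} (hα : 8 * α = n + 1) :
    ∫⁻ ξ in Ioo (0:ℝ) 1, E (ξ ^ n / √(1 - ξ ^ 8)) =
      E (Real.Gamma α * √π / Real.Gamma (α + 1/2) / 8) := by
  have hα0 : 0 < α := by have : (0:ℝ) ≤ n := Nat.cast_nonneg n
                         linarith
  have hB := ProbabilityTheory.beta_pos hα0 (show (0:ℝ) < 1/2 by norm_num)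
  have h := ProbabilityTheory.lintegral_betaPDF_eq_one hα0 (show (0:ℝ) < 1/2 by norm_num)
  rw [ProbabilityTheory.lintegral_betaPDF] at h
  have hBe : Real.Gamma α * √π / Real.Gamma (α + 1/2) = ProbabilityTheory.beta α (1/2) := by
    rw [ProbabilityTheory.beta, Real.Gamma_one_half_eq]
  rw [hBe]
  set B := ProbabilityTheory.beta α (1/2)
  have h2 : ∫⁻ x in Ioo (0:ℝ) 1, E (1 / B * x ^ (α - 1) * (1 - x) ^ ((1:ℝ)/2 - 1)) =
      ∫⁻ ξ in Ioo (0:ℝ) 1, E (8 / B * (ξ ^ n / √(1 - ξ ^ 8))) := by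
    refine covR measurableSet_Ioo (fun s => s ^ 8) (fun s => 8 * s ^ 7) (fun x => x ^ ((1:ℝ)/8)) ?_ ?_ ?_ ?_ ?_ _ _ ?_
    · intro x _; simpa using (hasDerivAt_pow 8 x)
    · intro x hx; exact ⟨pow_pos hx.1 8, pow_lt_one₀ hx.1.le hx.2 (by norm_num)⟩
    · intro x hx; exact ⟨Real.rpow_pos_of_pos hx.1 _, Real.rpow_lt_one hx.1.le hx.2 (by norm_num)⟩
    · intro x hx
      rw [← Real.rpow_natCast, ← Real.rpow_mul hx.1.le]; norm_num
    · intro x hx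
      rw [← Real.rpow_natCast, ← Real.rpow_mul hx.1.le]; norm_num
    · intro s hs
      have h0 := hs.1
      have h1 : s ^ 8 < 1 := pow_lt_one₀ hs.1.le hs.2 (by norm_num)
      rw [abs_of_pos (by positivity), show (1:ℝ)/2 - 1 = -(1/2) by norm_num,
        Real.rpow_neg (by linarith), ← Real.sqrt_eq_rpow, ← Real.rpow_natCast s 8, ← Real.rpow_mul h0.le,
        ← Real.rpow_natCast s 7, ← Real.rpow_natCast s n]
      have : s ^ ((7:ℕ):ℝ) * s ^ (((8:ℕ):ℝ) * (α - 1)) = s ^ (n:ℝ) := by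
        rw [← Real.rpow_add h0]; congr 1; push_cast; linarith
      rw [← this]
      ring
  rw [h2] at h
  simp_rw [ENNReal.ofReal_mul (show 0 ≤ 8 / B by positivity)] at h
  rw [lintegral_const_mul' _ _ ENNReal.ofReal_ne_top] at h
  have h3 : E (B / 8) * (E (8 / B) * ∫⁻ ξ in Ioo (0:ℝ) 1, E (ξ ^ n / √(1 - ξ ^ 8))) = E (B / 8) * 1 := by rw [h]
  rw [← mul_assoc, ← ENNReal.ofReal_mul (by positivity), mul_one,
    show B / 8 * (8 / B) = 1 by field_simp, ENNReal.ofReal_one, one_mul] at h3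
  exact h3

noncomputable def ee : ENNReal := ∫⁻ σ in Ioo (0:ℝ) 1, E (1 + σ ^ 2) * E (ellipticK (σ ^ 4))
noncomputable def de : ENNReal := ∫⁻ σ in Ioo (0:ℝ) 1, E (1 - σ ^ 2) * E (ellipticK (σ ^ 4))

lemma pow_lt_one_aux {s : ℝ} (hs : s ∈ Ioo (0:ℝ) 1) (n : ℕ) (hn : n ≠ 0) : s ^ n < 1 :=
  pow_lt_one₀ hs.1.le hs.2 hn

lemma K_alg {σ : ℝ} (hσ : σ ∈ Ioo (0:ℝ) 1) :
    E (ellipticK (σ ^ 4)) = ∫⁻ ξ in Ioo (0:ℝ) 1, E (4 * ξ ^ 3 / √(1 - ξ ^ 8) / √(1 - σ ^ 8 * ξ ^ 8)) := by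
  rw [K_lint (by rw [← pow_mul]; exact pow_lt_one_aux hσ _ (by norm_num))]
  refine covR measurableSet_Ioo (fun s => arcsin (s ^ 4)) (fun s => 1 / √(1 - (s ^ 4) ^ 2) * (4 * s ^ 3))
    (fun θ => √(√(sin θ))) ?_ ?_ ?_ ?_ ?_ _ _ ?_
  · intro s hs
    have h1 := pow_lt_one_aux hs 4 (by norm_num)
    have h0 : 0 < s ^ 4 := pow_pos hs.1 4
    have h3 : HasDerivAt (fun x : ℝ => x ^ 4) (4 * s ^ 3) s := by simpa using hasDerivAt_pow 4 s
    exact HasDerivAt.comp (h₂ := arcsin) (h := fun x : ℝ => x ^ 4) s (hasDerivAt_arcsin (by linarith) h1.ne) h3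
  · intro s hs
    have h1 := pow_lt_one_aux hs 4 (by norm_num)
    have h0 : 0 < s ^ 4 := pow_pos hs.1 4
    exact ⟨arcsin_pos.2 h0, arcsin_lt_pi_div_two.2 h1⟩
  · intro θ hθ
    have h0 : 0 < sin θ := sin_pos_of_pos_of_lt_pi hθ.1 (by linarith [hθ.2, pi_pos])
    have h1 : sin θ < 1 := by
      have := sin_lt_sin_of_lt_of_le_pi_div_two (by linarith [hθ.1, pi_pos]) le_rfl hθ.2
      simpa using this
    refine ⟨by positivity, ?_⟩
    rw [Real.sqrt_lt' one_pos, Real.sqrt_lt' (by norm_num)]; simpa using h1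
  · intro s hs
    have h1 := pow_lt_one_aux hs 4 (by norm_num)
    have h0 : 0 < s ^ 4 := pow_pos hs.1 4
    rw [sin_arcsin (by linarith) h1.le, show s ^ 4 = (s ^ 2) ^ 2 by ring, Real.sqrt_sq (by positivity), Real.sqrt_sq hs.1.le]
  · intro θ hθ
    have h0 : 0 < sin θ := sin_pos_of_pos_of_lt_pi hθ.1 (by linarith [hθ.2, pi_pos])
    rw [show √√(sin θ) ^ 4 = (√√(sin θ) ^ 2) ^ 2 by ring, Real.sq_sqrt (by positivity), Real.sq_sqrt h0.le]
    exact arcsin_sin (by linarith [hθ.1, pi_pos]) hθ.2.le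
  · intro s hs
    have h1 := pow_lt_one_aux hs 4 (by norm_num)
    have h0 : 0 < s ^ 4 := pow_pos hs.1 4
    have := hs.1
    rw [sin_arcsin (by linarith) h1.le, abs_of_nonneg (by positivity)]
    rw [← pow_mul, ← pow_mul]
    norm_num
    ring

lemma tri_meas (f : ℝ → ℝ → ENNReal) (hfm : Measurable (Function.uncurry f)) :
    Measurable fun ξ => ∫⁻ w in Ioo 0 ξ, f ξ w := by
  have : (fun ξ => ∫⁻ w in Ioo 0 ξ, f ξ w) =
      fun ξ => ∫⁻ w, {p : ℝ × ℝ | p.2 ∈ Ioo 0 p.1}.indicator (Function.uncurry f) (ξ, w) := by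
    ext ξ; rw [← lintegral_indicator measurableSet_Ioo]; rfl
  rw [this]
  refine Measurable.lintegral_prod_right' (hfm.indicator ?_)
  exact (measurableSet_lt measurable_const measurable_snd).inter
    (measurableSet_lt measurable_snd measurable_fst)

lemma lint_square (f : ℝ → ℝ → ENNReal) (hfm : Measurable (Function.uncurry f)) :
    ∫⁻ ξ in Ioo (0:ℝ) 1, ((∫⁻ w in Ioo 0 ξ, f ξ w) + ∫⁻ w in Ioo 0 ξ, f w ξ) =
    ∫⁻ ξ in Ioo (0:ℝ) 1, ∫⁻ w in Ioo (0:ℝ) 1, f ξ w := by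
  have hfm' : Measurable (Function.uncurry fun x y => f y x) := hfm.comp measurable_swap
  have e3 : ∀ ξ ∈ Ioo (0:ℝ) 1, (∫⁻ w in Ioo 0 ξ, f ξ w) + ∫⁻ w in Ioo ξ 1, f ξ w =
      ∫⁻ w in Ioo 0 1, f ξ w := by
    intro ξ hξ
    rw [← lintegral_union measurableSet_Ioo]
    · refine setLIntegral_congr ?_
      have : (Ioo (0:ℝ) ξ ∪ Ioo ξ 1 : Set ℝ) =ᵐ[volume] (Ioc 0 ξ ∪ Ioo ξ 1 : Set ℝ) := 
        ae_eq_set_union Ioo_ae_eq_Ioc Filter.EventuallyEq.rfl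
      rwa [Ioc_union_Ioo_eq_Ioo hξ.1.le hξ.2] at this
    · rw [Set.disjoint_left]; rintro x ⟨_, a⟩ ⟨b, _⟩; linarith
  rw [lintegral_add_left (tri_meas f hfm), lint_tri (fun x y => f y x) hfm',
    ← lintegral_add_left (tri_meas f hfm), setLIntegral_congr_fun measurableSet_Ioo e3]

lemma ee_eq1 : ee = E 4 * ((∫⁻ ξ in Ioo (0:ℝ) 1, E (ξ ^ 2 / √(1 - ξ ^ 8))) *
    ∫⁻ ξ in Ioo (0:ℝ) 1, E (ξ ^ 0 / √(1 - ξ ^ 8))) := by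
  have e1 : ee = ∫⁻ σ in Ioo (0:ℝ) 1, ∫⁻ ξ in Ioo (0:ℝ) 1,
      E ((1 + σ ^ 2) * (4 * ξ ^ 3 / √(1 - ξ ^ 8) / √(1 - σ ^ 8 * ξ ^ 8))) := by
    unfold ee
    refine setLIntegral_congr_fun measurableSet_Ioo fun σ hσ => ?_
    rw [K_alg hσ, ← lintegral_const_mul' _ _ ENNReal.ofReal_ne_top]
    simp_rw [← ENNReal.ofReal_mul (show 0 ≤ 1 + σ ^ 2 by positivity)]
  rw [e1, lint_swap _ (by unfold Function.uncurry; fun_prop)]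
  set f : ℝ → ℝ → ENNReal := fun ξ w => E (4 * (ξ ^ 2 / √(1 - ξ ^ 8)) * (w ^ 0 / √(1 - w ^ 8))) with hf
  have hfm : Measurable (Function.uncurry f) := by unfold Function.uncurry; fun_prop
  have e2 : ∀ ξ ∈ Ioo (0:ℝ) 1, ∫⁻ σ in Ioo (0:ℝ) 1,
      E ((1 + σ ^ 2) * (4 * ξ ^ 3 / √(1 - ξ ^ 8) / √(1 - σ ^ 8 * ξ ^ 8))) =
      (∫⁻ w in Ioo 0 ξ, f ξ w) + ∫⁻ w in Ioo 0 ξ, f w ξ := by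
    intro ξ hξ
    have h0 := hξ.1
    rw [← lintegral_add_left (by fun_prop)]
    simp only [hf]
    have e5 : ∀ w : ℝ, E (4 * (ξ ^ 2 / √(1 - ξ ^ 8)) * (w ^ 0 / √(1 - w ^ 8))) +
        E (4 * (w ^ 2 / √(1 - w ^ 8)) * (ξ ^ 0 / √(1 - ξ ^ 8))) =
        E (4 * (ξ ^ 2 / √(1 - ξ ^ 8)) * (w ^ 0 / √(1 - w ^ 8)) +
          4 * (w ^ 2 / √(1 - w ^ 8)) * (ξ ^ 0 / √(1 - ξ ^ 8))) := fun w =>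
      (ENNReal.ofReal_add (by positivity) (by positivity)).symm
    simp_rw [e5]
    symm
    refine lint_scale hξ.1 _ _ fun s hs => ?_
    rw [mul_pow ξ s 8, mul_comm (ξ ^ 8)]
    ring
  rw [setLIntegral_congr_fun measurableSet_Ioo e2, lint_square f hfm]
  simp only [hf]
  have e4 : ∀ ξ : ℝ, ∫⁻ w in Ioo (0:ℝ) 1, E (4 * (ξ ^ 2 / √(1 - ξ ^ 8)) * (w ^ 0 / √(1 - w ^ 8))) =
      E 4 * (E (ξ ^ 2 / √(1 - ξ ^ 8)) * ∫⁻ w in Ioo (0:ℝ) 1, E (w ^ 0 / √(1 - w ^ 8))) := by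
    intro ξ
    simp_rw [ENNReal.ofReal_mul (show 0 ≤ 4 * (ξ ^ 2 / √(1 - ξ ^ 8)) by positivity)]
    rw [lintegral_const_mul' _ _ ENNReal.ofReal_ne_top, ENNReal.ofReal_mul (by norm_num), mul_assoc]
  simp_rw [e4]
  rw [lintegral_const_mul' _ _ ENNReal.ofReal_ne_top, lintegral_mul_const _ (by fun_prop)]

lemma ee_val : ee = E (√2 * (Real.Gamma (1/8) * Real.Gamma (3/8)) ^ 2 / (64 * π)) := by
  rw [ee_eq1, beta_lint 2 (α := 3/8) (by norm_num), beta_lint 0 (α := 1/8) (by norm_num)]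
  have g1 := Real.Gamma_pos_of_pos (show (0:ℝ) < 1/8 by norm_num)
  have g3 := Real.Gamma_pos_of_pos (show (0:ℝ) < 3/8 by norm_num)
  have g5 := Real.Gamma_pos_of_pos (show (0:ℝ) < 5/8 by norm_num)
  have g7 := Real.Gamma_pos_of_pos (show (0:ℝ) < 7/8 by norm_num)
  have r1 := Real.Gamma_mul_Gamma_one_sub (1/8)
  have r3 := Real.Gamma_mul_Gamma_one_sub (3/8)
  norm_num at r1 r3
  norm_num
  rw [← ENNReal.ofReal_mul (by positivity), show (4:ENNReal) = E 4 by simp, ← ENNReal.ofReal_mul (by positivity)]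
  congr 1
  have hs1 : 0 < sin (π * (1/8)) := sin_pos_of_pos_of_lt_pi (by positivity) (by linarith [pi_pos])
  have hs3 : sin (π * (3/8)) = cos (π * (1/8)) := by
    rw [← sin_pi_div_two_sub]; congr 1; ring
  have hc : sin (π * (1/8)) * cos (π * (1/8)) = √2 / 4 := by
    have := sin_two_mul (π * (1/8))
    rw [show 2 * (π * (1/8)) = π / 4 by ring, sin_pi_div_four] at this
    linarith
  have hc0 : cos (π * (1/8)) ≠ 0 := by
    intro h; rw [h] at hc; have : 0 < √2 := by positivity
    linarith
  rw [hs3] at r3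
  rw [eq_div_iff hs1.ne'] at r1
  rw [eq_div_iff hc0] at r3
  have hp := Real.mul_self_sqrt pi_pos.le
  have h6 : √2 * (Real.Gamma (1/8) * Real.Gamma (3/8) * (Real.Gamma (7/8) * Real.Gamma (5/8))) = 4 * π ^ 2 := by
    have : √2 = 4 * (sin (π * (1/8)) * cos (π * (1/8))) := by rw [hc]; ring
    rw [this]
    linear_combination 4 * Real.Gamma (3/8) * Real.Gamma (5/8) * cos (π * (1/8)) * r1 + 4 * π * r3
  field_simp
  have hp2 : √π ^ 2 = π := Real.sq_sqrt pi_pos.le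
  rw [hp2]
  linear_combination -64 * h6

noncomputable def DD : ENNReal := ∫⁻ h in Ioo (0:ℝ) 1, E (1 / √(1 - h)) * Me 1 h
noncomputable def AA : ENNReal := ∫⁻ h in Ioo (0:ℝ) 1, E (1 / √(1 + h)) * Me 1 h
noncomputable def JJ : ENNReal :=
  ∫⁻ X in Ioo (0:ℝ) 1, E (1 / √(1 - X ^ 2)) * Me (√(1 + X)) (√(1 - X))

lemma K_four {σ : ℝ} (hσ : σ ∈ Ioo (0:ℝ) 1) : E (ellipticK (σ ^ 4)) = Me (1 + σ ^ 4) (1 - σ ^ 4) := by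
  have h4 := pow_lt_one_aux hσ 4 (by norm_num)
  have h40 : 0 < σ ^ 4 := pow_pos hσ.1 4
  rw [K_Me (by nlinarith), ← Me_gauss (a := 1 + σ ^ 4) (by linarith) (by linarith), Me_symm]
  ring_nf

lemma DD_de : DD = E 4 * de := by
  unfold DD de
  rw [← lintegral_const_mul' _ _ ENNReal.ofReal_ne_top]
  rw [cov measurableSet_Ioo (fun s => ((1 - s ^ 2) / (1 + s ^ 2)) ^ 2)
    (fun s => -(8 * s * (1 - s ^ 2) / (1 + s ^ 2) ^ 3))
    (fun h => √((1 - √h) / (1 + √h)))]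
  · refine setLIntegral_congr_fun measurableSet_Ioo fun σ hσ => ?_
    have h0 := hσ.1
    have h2 := pow_lt_one_aux hσ 2 (by norm_num)
    have h2' : 0 < 1 - σ ^ 2 := by linarith
    rw [K_four hσ]
    have e1 : Me (1 + σ ^ 4) (1 - σ ^ 4) = E (1 / (1 + σ ^ 2) ^ 2) * Me 1 (((1 - σ ^ 2) / (1 + σ ^ 2)) ^ 2) := by
      rw [← Me_homog (by positivity), mul_one, show (1 + σ ^ 2) ^ 2 * ((1 - σ ^ 2) / (1 + σ ^ 2)) ^ 2 = (1 - σ ^ 2) ^ 2 by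
        field_simp, ← Me_gauss (a := (1 + σ ^ 2) ^ 2) (by positivity) (by positivity), Me_symm, ← mul_pow,
        Real.sqrt_sq (by positivity)]
      congr 1 <;> ring
    rw [e1, ← mul_assoc, ← mul_assoc, ← mul_assoc, ← ENNReal.ofReal_mul (by positivity),
      ← ENNReal.ofReal_mul (by positivity), ← ENNReal.ofReal_mul (by positivity)]
    congr 2
    rw [abs_neg, abs_of_pos (by positivity), show 1 - ((1 - σ ^ 2) / (1 + σ ^ 2)) ^ 2 = (2 * σ / (1 + σ ^ 2)) ^ 2 by
      field_simp; ring, Real.sqrt_sq (by positivity)]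
    field_simp
    norm_num
  · intro s hs
    have h3 : 1 + s ^ 2 ≠ 0 := by positivity
    refine ((((hasDerivAt_pow 2 s).const_sub 1).fun_div ((hasDerivAt_pow 2 s).const_add 1) h3).fun_pow
      2).congr_deriv ?_
    field_simp
    push_cast
    field_simp
    ring
  · intro s hs
    have h2 := pow_lt_one_aux hs 2 (by norm_num)
    have h0 : 0 < s ^ 2 := pow_pos hs.1 2
    have h4 : (1 - s ^ 2) / (1 + s ^ 2) < 1 := by rw [div_lt_one (by linarith)]; linarith
    have h5 : 0 < (1 - s ^ 2) / (1 + s ^ 2) := div_pos (by linarith) (by linarith)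
    exact ⟨by positivity, by nlinarith⟩
  · intro x hx
    have h1 : 0 < √x := Real.sqrt_pos.2 hx.1
    have h2 : √x < 1 := by rw [Real.sqrt_lt' one_pos]; linarith [hx.2]
    refine ⟨Real.sqrt_pos.2 (div_pos (by linarith) (by linarith)), ?_⟩
    rw [Real.sqrt_lt' one_pos, div_lt_iff₀ (by linarith)]; linarith
  · intro s hs
    have h2 := pow_lt_one_aux hs 2 (by norm_num)
    have h0 : 0 < s ^ 2 := pow_pos hs.1 2
    have h5 : 0 < (1 - s ^ 2) / (1 + s ^ 2) := div_pos (by linarith) (by linarith)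
    rw [Real.sqrt_sq h5.le]
    rw [show 1 + (1 - s ^ 2) / (1 + s ^ 2) = 2 / (1 + s ^ 2) by field_simp; ring,
      show 1 - (1 - s ^ 2) / (1 + s ^ 2) = 2 * s ^ 2 / (1 + s ^ 2) by field_simp; ring,
      show 2 * s ^ 2 / (1 + s ^ 2) / (2 / (1 + s ^ 2)) = s ^ 2 by field_simp]
    exact Real.sqrt_sq hs.1.le
  · intro x hx
    have h1 : 0 < √x := Real.sqrt_pos.2 hx.1
    have h2 : √x < 1 := by rw [Real.sqrt_lt' one_pos]; linarith [hx.2]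
    rw [Real.sq_sqrt (div_nonneg (by linarith) (by linarith)),
      show 1 + (1 - √x) / (1 + √x) = 2 / (1 + √x) by field_simp; ring,
      show 1 - (1 - √x) / (1 + √x) = 2 * √x / (1 + √x) by field_simp; ring,
      show 2 * √x / (1 + √x) / (2 / (1 + √x)) = √x by field_simp]
    exact Real.sq_sqrt hx.1.le

lemma Me_landen {t : ℝ} (ht : 0 < t) : Me 1 (2 * t / (1 + t ^ 2)) = E ((1 + t ^ 2) / 2) * Me 1 (t ^ 2) := by
  rw [← Me_gauss one_pos (show 0 < t ^ 2 by positivity), Me_symm (√_)]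
  have : Me 1 (2 * t / (1 + t ^ 2)) = Me (2 / (1 + t ^ 2) * ((1 + t ^ 2) / 2)) (2 / (1 + t ^ 2) * t) := by
    congr 1 <;> field_simp
  rw [this, Me_homog (by positivity), one_mul, Real.sqrt_sq ht.le]
  congr 2; field_simp

lemma cov_landen (g : ℝ → ENNReal) : ∫⁻ h in Ioo (0:ℝ) 1, g h =
    ∫⁻ t in Ioo (0:ℝ) 1, E |2 * (1 - t ^ 2) / (1 + t ^ 2) ^ 2| * g (2 * t / (1 + t ^ 2)) := by
  refine cov measurableSet_Ioo (fun t => 2 * t / (1 + t ^ 2)) _ (fun h => (1 - √(1 - h ^ 2)) / h) ?_ ?_ ?_ ?_ ?_ _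
  · intro s hs
    have h3 : 1 + s ^ 2 ≠ 0 := by positivity
    refine (((hasDerivAt_id s).const_mul 2).fun_div ((hasDerivAt_pow 2 s).const_add 1) h3).congr_deriv ?_
    simp only [id]
    field_simp
    push_cast
    ring
  · intro s hs
    have := hs.1
    exact ⟨by positivity, by rw [div_lt_one (by positivity)]; nlinarith [hs.2]⟩
  · intro h hh
    have h0 : h ^ 2 < 1 := pow_lt_one_aux hh 2 (by norm_num)
    have h1 := hh.1
    have h5 : √(1 - h ^ 2) < 1 := by rw [Real.sqrt_lt' one_pos]; nlinarith
    have h6 : 1 - h < √(1 - h ^ 2) := by apply Real.lt_sqrt_of_sq_lt; nlinarith [hh.2]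
    exact ⟨div_pos (by linarith) h1, by rw [div_lt_one h1]; linarith⟩
  · intro s hs
    have := hs.1
    have h2 := pow_lt_one_aux hs 2 (by norm_num)
    rw [show 1 - (2 * s / (1 + s ^ 2)) ^ 2 = ((1 - s ^ 2) / (1 + s ^ 2)) ^ 2 by field_simp; ring,
      Real.sqrt_sq (div_nonneg (by linarith) (by positivity))]
    field_simp
    ring
  · intro h hh
    have h0 : h ^ 2 < 1 := pow_lt_one_aux hh 2 (by norm_num)
    have h1 := hh.1
    have h5 : √(1 - h ^ 2) < 1 := by rw [Real.sqrt_lt' one_pos]; nlinarith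
    have h6 := Real.sq_sqrt (show 0 ≤ 1 - h ^ 2 by linarith)
    set r := √(1 - h ^ 2)
    rw [show 1 + ((1 - r) / h) ^ 2 = 2 * (1 - r) / h ^ 2 by field_simp; linear_combination h6]
    have : 1 - r ≠ 0 := by linarith
    field_simp

lemma DD_land : DD = ∫⁻ t in Ioo (0:ℝ) 1, E ((1 + t) / √(1 + t ^ 2)) * Me 1 (t ^ 2) := by
  unfold DD
  rw [cov_landen]
  refine setLIntegral_congr_fun measurableSet_Ioo fun t ht => ?_
  have h0 := ht.1
  have h1 : 0 < 1 - t := by linarith [ht.2]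
  have h2 : 0 < 1 - t ^ 2 := by nlinarith
  rw [Me_landen ht.1, ← mul_assoc, ← mul_assoc, ← ENNReal.ofReal_mul (by positivity), ← ENNReal.ofReal_mul (by positivity)]
  congr 2
  rw [abs_of_pos (by positivity), show 1 - 2 * t / (1 + t ^ 2) = (1 - t) ^ 2 / (1 + t ^ 2) by field_simp; ring,
    Real.sqrt_div (by positivity), Real.sqrt_sq h1.le]
  have h4 := Real.sq_sqrt (show 0 ≤ 1 + t ^ 2 by positivity)
  field_simp
  rw [h4]; ring

lemma AA_land : AA = ∫⁻ t in Ioo (0:ℝ) 1, E ((1 - t) / √(1 + t ^ 2)) * Me 1 (t ^ 2) := by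
  unfold AA
  rw [cov_landen]
  refine setLIntegral_congr_fun measurableSet_Ioo fun t ht => ?_
  have h0 := ht.1
  have h1 : 0 < 1 - t := by linarith [ht.2]
  have h2 : 0 < 1 - t ^ 2 := by nlinarith
  rw [Me_landen ht.1, ← mul_assoc, ← mul_assoc, ← ENNReal.ofReal_mul (by positivity), ← ENNReal.ofReal_mul (by positivity)]
  congr 2
  rw [abs_of_pos (by positivity), show 1 + 2 * t / (1 + t ^ 2) = (1 + t) ^ 2 / (1 + t ^ 2) by field_simp; ring,
    Real.sqrt_div (by positivity), Real.sqrt_sq (by positivity)]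
  have h4 := Real.sq_sqrt (show 0 ≤ 1 + t ^ 2 by positivity)
  field_simp
  rw [h4]; ring

lemma AA_sq : AA = ∫⁻ t in Ioo (0:ℝ) 1, E (2 * t / √(1 + t ^ 2)) * Me 1 (t ^ 2) := by
  unfold AA
  rw [cov measurableSet_Ioo (fun t => t ^ 2) (fun t => 2 * t) (fun h => √h)]
  · refine setLIntegral_congr_fun measurableSet_Ioo fun t ht => ?_
    have h0 := ht.1
    rw [← mul_assoc, ← ENNReal.ofReal_mul (by positivity), abs_of_pos (by positivity), mul_one_div]
  · intro s _; simpa using hasDerivAt_pow 2 s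
  · intro s hs; exact ⟨pow_pos hs.1 2, pow_lt_one_aux hs 2 (by norm_num)⟩
  · intro x hx; exact ⟨Real.sqrt_pos.2 hx.1, by rw [Real.sqrt_lt' one_pos]; linarith [hx.2]⟩
  · intro s hs; exact Real.sqrt_sq hs.1.le
  · intro x hx; exact Real.sq_sqrt hx.1.le

lemma DD_AA : DD = AA + AA := by
  nth_rw 1 [AA_land]
  rw [AA_sq, DD_land, ← lintegral_add_right _ (by
    exact Measurable.mul (by fun_prop) (Me_meas (by fun_prop) (by fun_prop)))]
  refine setLIntegral_congr_fun measurableSet_Ioo fun t ht => ?_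
  have h0 := ht.1
  rw [← add_mul, ← ENNReal.ofReal_add (div_nonneg (by linarith [ht.2]) (by positivity)) (by positivity)]
  congr 2
  ring

lemma DA_double (c : ℝ) :
    ∫⁻ h in Ioo (0:ℝ) 1, E (1 / √(1 + c * h)) * Me 1 h = ∫⁻ X in Ioo (0:ℝ) 1, E (1 / √(1 - X ^ 2)) *
      ∫⁻ Y in Ioo (0:ℝ) 1, E (1 / √(1 - Y ^ 2) / √(1 + c * (X * Y))) := by
  have e1 : ∀ h ∈ Ioo (0:ℝ) 1, E (1 / √(1 + c * h)) * Me 1 h = ∫⁻ X in Ioo h 1, 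
      E (1 / √(1 + c * h) * (1 / √((1 - X ^ 2) * (X ^ 2 - h ^ 2)))) := by
    intro h hh
    rw [Me_one hh.1 hh.2, ← lintegral_const_mul' _ _ ENNReal.ofReal_ne_top]
    simp_rw [← ENNReal.ofReal_mul (show 0 ≤ 1 / √(1 + c * h) by positivity)]
  rw [setLIntegral_congr_fun measurableSet_Ioo e1, ← lint_tri (fun X h => 
    E (1 / √(1 + c * h) * (1 / √((1 - X ^ 2) * (X ^ 2 - h ^ 2))))) (by unfold Function.uncurry; fun_prop)]
  refine setLIntegral_congr_fun measurableSet_Ioo fun X hX => ?_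
  have h0 := hX.1
  have h2 := pow_lt_one_aux hX 2 (by norm_num)
  rw [← lintegral_const_mul' _ _ ENNReal.ofReal_ne_top]
  simp_rw [← ENNReal.ofReal_mul (show 0 ≤ 1 / √(1 - X ^ 2) by positivity)]
  refine lint_scale hX.1 _ _ fun s hs => ?_
  rw [show (1 - X ^ 2) * (X ^ 2 - (X * s) ^ 2) = X ^ 2 * ((1 - X ^ 2) * (1 - s ^ 2)) by ring,
    Real.sqrt_mul (by positivity), Real.sqrt_sq h0.le, Real.sqrt_mul (by linarith)]
  field_simp

lemma inner_Me {X : ℝ} (hX : X ∈ Ioo (0:ℝ) 1) :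
    (∫⁻ Y in Ioo (0:ℝ) 1, E (1 / √(1 - Y ^ 2) / √(1 + (-1) * (X * Y)))) +
    (∫⁻ Y in Ioo (0:ℝ) 1, E (1 / √(1 - Y ^ 2) / √(1 + 1 * (X * Y)))) =
    E 2 * Me (√(1 + X)) (√(1 - X)) := by
  have e1 : ∫⁻ Y in Ioo (0:ℝ) 1, E (1 / √(1 - Y ^ 2) / √(1 + 1 * (X * Y))) =
      ∫⁻ Y in Ioo (-1:ℝ) 0, E (1 / √(1 - Y ^ 2) / √(1 + (-1) * (X * Y))) := by
    refine covR measurableSet_Ioo (fun x => -x) (fun _ => -1) (fun x => -x) ?_ ?_ ?_ ?_ ?_ _ _ ?_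
    · intro x _; exact (hasDerivAt_id x).neg
    · rintro x ⟨a, b⟩; constructor <;> linarith
    · rintro x ⟨a, b⟩; constructor <;> linarith
    · simp
    · simp
    · intro x _; simp
  rw [e1, Me_symm, Me_trig (Real.sqrt_pos.2 (by linarith [hX.2])) (Real.sqrt_pos.2 (by linarith [hX.1])),
    ← lintegral_const_mul' _ _ ENNReal.ofReal_ne_top]
  simp_rw [← ENNReal.ofReal_mul (show (0:ℝ) ≤ 2 by norm_num)]
  rw [add_comm, ← lintegral_union measurableSet_Ioo]
  · have : (Ioo (-1:ℝ) 0 ∪ Ioo 0 1 : Set ℝ) =ᵐ[volume] (Ioc (-1) 0 ∪ Ioo 0 1 : Set ℝ) := 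
        ae_eq_set_union Ioo_ae_eq_Ioc Filter.EventuallyEq.rfl
    rw [Ioc_union_Ioo_eq_Ioo (by norm_num) (by norm_num)] at this
    rw [setLIntegral_congr this]
    refine covR measurableSet_Ioo (fun θ => cos (2 * θ)) (fun θ => -sin (2 * θ) * 2) (fun Y => arccos Y / 2) ?_ ?_ ?_ ?_ ?_ _ _ ?_
    · intro θ _
      have h3 : HasDerivAt (fun θ : ℝ => 2 * θ) 2 θ := by simpa using (hasDerivAt_id θ).const_mul 2
      exact HasDerivAt.comp (h₂ := cos) θ (hasDerivAt_cos _) h3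
    · intro θ hθ
      have h0 : 0 < cos θ := cos_pos_of_mem_Ioo ⟨by linarith [hθ.1, pi_pos], hθ.2⟩
      have h1 : 0 < sin θ := sin_pos_of_pos_of_lt_pi hθ.1 (by linarith [hθ.2, pi_pos])
      have h2 := sin_sq_add_cos_sq θ
      rw [cos_two_mul]
      constructor <;> nlinarith
    · intro Y hY
      exact ⟨by have := arccos_pos.2 hY.2
                linarith, by
                have := arccos_lt_pi.2 hY.1
                linarith⟩
    · intro θ hθ
      rw [arccos_cos (by linarith [hθ.1]) (by linarith [hθ.2])]; ring
    · intro Y hY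
      rw [show 2 * (arccos Y / 2) = arccos Y by ring, cos_arccos hY.1.le hY.2.le]
    · intro θ hθ
      have h1 : 0 < sin (2 * θ) := sin_pos_of_pos_of_lt_pi (by linarith [hθ.1]) (by linarith [hθ.2, pi_pos])
      rw [abs_of_neg (by linarith), ← sin_sq, Real.sqrt_sq h1.le, Real.sq_sqrt (by linarith [hX.2]),
        Real.sq_sqrt (by linarith [hX.1]), show 1 + -1 * (X * cos (2 * θ)) = (1 - X) * cos θ ^ 2 + (1 + X) * sin θ ^ 2 by
          rw [cos_two_mul, sin_sq]; ring]
      field_simp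
  · rw [Set.disjoint_left]; rintro x ⟨_, a⟩ ⟨b, _⟩; linarith

lemma DA_JJ : DD + AA = E 2 * JJ := by
  have h1 := DA_double (-1)
  have h2 := DA_double 1
  have e1 : DD = ∫⁻ h in Ioo (0:ℝ) 1, E (1 / √(1 + (-1) * h)) * Me 1 h := by
    unfold DD; congr 1; ext h; congr 3; ring_nf
  have e2 : AA = ∫⁻ h in Ioo (0:ℝ) 1, E (1 / √(1 + 1 * h)) * Me 1 h := by
    unfold AA; congr 1; ext h; congr 3; ring_nf
  rw [e1, e2, h1, h2, ← lintegral_add_left]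
  · unfold JJ
    rw [← lintegral_const_mul' _ _ ENNReal.ofReal_ne_top]
    refine setLIntegral_congr_fun measurableSet_Ioo fun X hX => ?_
    rw [← mul_add, inner_Me hX]; ring
  · refine Measurable.mul (by fun_prop) ?_
    refine Measurable.lintegral_prod_right (f := fun X Y : ℝ => E (1 / √(1 - Y ^ 2) / √(1 + (-1) * (X * Y)))) ?_
    unfold Function.uncurry
    fun_prop

lemma ee_JJ : E 4 * ee = E (2 * √2) * JJ := by
  have e1 : E 4 * ee = ∫⁻ σ in Ioo (0:ℝ) 1, ∫⁻ θ in Ioo 0 (π/2),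
      E (4 * (1 + σ ^ 2) / √(yS (cos (2 * θ)) σ)) := by
    unfold ee
    rw [← lintegral_const_mul' _ _ ENNReal.ofReal_ne_top]
    refine setLIntegral_congr_fun measurableSet_Ioo fun σ hσ => ?_
    have h4 := pow_lt_one_aux hσ 4 (by norm_num)
    have h40 : 0 < σ ^ 4 := pow_pos hσ.1 4
    rw [K_four hσ, Me_trig (by linarith) (by linarith), ← mul_assoc, ← ENNReal.ofReal_mul (by norm_num), ← lintegral_const_mul' _ _ ENNReal.ofReal_ne_top]
    simp_rw [← ENNReal.ofReal_mul (show 0 ≤ 4 * (1 + σ ^ 2) by positivity)]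
    congr 1; ext θ
    rw [mul_one_div]
    congr 3
    unfold yS
    rw [cos_two_mul, sin_sq]; ring
  rw [e1, lint_swap _ (by unfold Function.uncurry yS; fun_prop)]
  unfold JJ
  rw [← lintegral_const_mul' _ _ ENNReal.ofReal_ne_top]
  have e2 : ∀ X ∈ Ioo (0:ℝ) 1, E (2 * √2) * (E (1 / √(1 - X ^ 2)) * Me (√(1 + X)) (√(1 - X))) =
      E (1 / √(1 - X ^ 2)) * E (yf (1 - 2 * X ^ 2)) := by
    intro X hX
    rw [y_Me hX.1.le hX.2]; ring
  rw [setLIntegral_congr_fun measurableSet_Ioo e2, cov (s := Ioo 0 (π/2)) (t := Ioo 0 1) measurableSet_Ioo sin cos arcsin]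
  · refine setLIntegral_congr_fun measurableSet_Ioo fun θ hθ => ?_
    have h0 : 0 < cos θ := cos_pos_of_mem_Ioo ⟨by linarith [hθ.1, pi_pos], hθ.2⟩
    rw [← y_lint, ← cos_sq', Real.sqrt_sq h0.le, abs_of_pos h0, ← mul_assoc, ← ENNReal.ofReal_mul h0.le,
      mul_one_div_cancel h0.ne', ENNReal.ofReal_one, one_mul]
    · congr 2; rw [cos_two_mul, sin_sq]; ring
    · rw [cos_two_mul]; nlinarith
  · intro θ _; exact hasDerivAt_sin θ
  · intro θ hθ
    have h0 : 0 < cos θ := cos_pos_of_mem_Ioo ⟨by linarith [hθ.1, pi_pos], hθ.2⟩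
    have h1 : 0 < sin θ := sin_pos_of_pos_of_lt_pi hθ.1 (by linarith [hθ.2, pi_pos])
    have h2 := sin_sq_add_cos_sq θ
    exact ⟨h1, by nlinarith⟩
  · intro X hX
    exact ⟨arcsin_pos.2 hX.1, arcsin_lt_pi_div_two.2 hX.2⟩
  · intro θ hθ; exact arcsin_sin (by linarith [hθ.1, pi_pos]) hθ.2.le
  · intro X hX; exact sin_arcsin (by linarith [hX.1]) hX.2.le

lemma de_val : de = E ((Real.Gamma (1/8) * Real.Gamma (3/8)) ^ 2 / (96 * π)) := by
  have h1 := DD_de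
  have h2 := DD_AA
  have h3 := DA_JJ
  have h4 := ee_JJ
  have h5 : E 12 * de = E (4 * √2) * ee := by
    calc E 12 * de = DD + DD + DD := by
          rw [h1, ← add_mul, ← add_mul, ← ENNReal.ofReal_add (by norm_num) (by norm_num),
            ← ENNReal.ofReal_add (by norm_num) (by norm_num)]; norm_num
      _ = (DD + AA) + (DD + AA) := by
          nth_rw 3 [h2]; ring
      _ = E (√2) * (E (2 * √2) * JJ) := by
          rw [h3, ← add_mul, ← ENNReal.ofReal_add (by norm_num) (by norm_num), ← mul_assoc,
            ← ENNReal.ofReal_mul (by positivity)]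
          congr 2
          have := Real.mul_self_sqrt (show (0:ℝ) ≤ 2 by norm_num)
          linarith
      _ = E (4 * √2) * ee := by
          rw [← h4, ← mul_assoc, ← ENNReal.ofReal_mul (by positivity)]; congr 2; ring
  have h6 : de = E (1/12) * (E 12 * de) := by
    rw [← mul_assoc, ← ENNReal.ofReal_mul (by norm_num)]; norm_num
  rw [h6, h5, ee_val, ← ENNReal.ofReal_mul (by positivity), ← ENNReal.ofReal_mul (by positivity)]
  congr 1
  have := Real.sq_sqrt (show (0:ℝ) ≤ 2 by norm_num)
  field_simp
  rw [this]; ring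

lemma paramDeriv {w : ℝ → ℝ} {F F' : ℝ → ℝ → ℝ} {a b x₀ : ℝ} (hab : a ≤ b) {U : Set ℝ} (hU : U ∈ 𝓝 x₀)
    (hw : IntervalIntegrable w volume a b)
    (hF : ∀ x ∈ U, ContinuousOn (F x) (Icc a b))
    (hF' : ContinuousOn (Function.uncurry F') (U ×ˢ Icc a b))
    (hd : ∀ x ∈ U, ∀ s ∈ Icc a b, HasDerivAt (fun x => F x s) (F' x s) x) :
    HasDerivAt (fun x => ∫ s in a..b, w s * F x s) (∫ s in a..b, w s * F' x₀ s) x₀ := by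
  obtain ⟨ε, hε, hb⟩ := Metric.nhds_basis_closedBall.mem_iff.1 hU
  have hK : IsCompact (Metric.closedBall x₀ ε ×ˢ Icc a b) := (isCompact_closedBall x₀ ε).prod isCompact_Icc
  obtain ⟨C, hC⟩ := hK.exists_bound_of_continuousOn (hF'.mono (prod_mono hb le_rfl))
  have hsub : uIoc a b ⊆ Icc a b := by rw [uIoc_of_le hab]; exact Ioc_subset_Icc_self
  have hx₀ : x₀ ∈ U := mem_of_mem_nhds hU
  have hwm : AEStronglyMeasurable w (volume.restrict (uIoc a b)) := by
    rw [uIoc_of_le hab]; exact hw.1.aestronglyMeasurable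
  have hcI : ∀ f : ℝ → ℝ, ContinuousOn f (Icc a b) → AEStronglyMeasurable f (volume.restrict (uIoc a b)) := by
    intro f hf
    exact (hf.mono hsub).aestronglyMeasurable measurableSet_uIoc
  have hF'x : ContinuousOn (F' x₀) (Icc a b) := by
    have : F' x₀ = Function.uncurry F' ∘ fun s => (x₀, s) := rfl
    rw [this]
    exact hF'.comp (by fun_prop) (fun s hs => ⟨hx₀, hs⟩)
  refine (intervalIntegral.hasDerivAt_integral_of_dominated_loc_of_deriv_le
    (bound := fun s => |w s| * C) (F := fun x s => w s * F x s) (F' := fun x s => w s * F' x s)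
    (Metric.closedBall_mem_nhds x₀ hε) ?_ ?_ ?_ ?_ ?_ ?_).2
  · filter_upwards [hU] with x hx
    exact hwm.mul (hcI _ (hF x hx))
  · exact hw.mul_continuousOn (by rw [uIcc_of_le hab]; exact hF x₀ hx₀)
  · exact hwm.mul (hcI _ hF'x)
  · refine Eventually.of_forall fun s hs x hx => ?_
    rw [norm_mul]
    exact mul_le_mul_of_nonneg_left (hC (x, s) ⟨hx, hsub hs⟩) (norm_nonneg _)
  · exact hw.abs.mul_const C
  · refine Eventually.of_forall fun s hs x hx => ?_
    exact (hd x (hb hx) s (hsub hs)).const_mul (w s)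

lemma paramDeriv1 {F F' : ℝ → ℝ → ℝ} {a b x₀ : ℝ} (hab : a ≤ b) {U : Set ℝ} (hU : U ∈ 𝓝 x₀)
    (hF : ∀ x ∈ U, ContinuousOn (F x) (Icc a b))
    (hF' : ContinuousOn (Function.uncurry F') (U ×ˢ Icc a b))
    (hd : ∀ x ∈ U, ∀ s ∈ Icc a b, HasDerivAt (fun x => F x s) (F' x s) x) :
    HasDerivAt (fun x => ∫ s in a..b, F x s) (∫ s in a..b, F' x₀ s) x₀ := by
  simpa using paramDeriv (w := fun _ => 1) hab hU (by simp) hF hF' hd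

noncomputable def yd (x : ℝ) : ℝ := ∫ σ in (0:ℝ)..1, -(4 * (1 + σ ^ 2) * σ ^ 4 / √(yS x σ) ^ 3)
noncomputable def ydd (x : ℝ) : ℝ := ∫ σ in (0:ℝ)..1, 12 * (1 + σ ^ 2) * σ ^ 8 / √(yS x σ) ^ 5
noncomputable def YY (x : ℝ) : ℝ := (1 - x ^ 2) * yd x

lemma sqrt_yS_ne {x : ℝ} (hx : -1 < x) (σ : ℝ) : √(yS x σ) ≠ 0 := (Real.sqrt_pos.2 (yS_pos hx σ)).ne'

lemma sqrt_yS_deriv {x : ℝ} (hx : -1 < x) (σ : ℝ) :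
    HasDerivAt (fun x => √(yS x σ)) (σ ^ 4 / √(yS x σ)) x := by
  have h : HasDerivAt (fun x => yS x σ) (2 * σ ^ 4) x := by
    unfold yS
    exact ((((hasDerivAt_id x).const_mul (2 * σ ^ 4)).const_add 1).add_const (σ ^ 8)).congr_deriv (by ring)
  refine (h.sqrt (yS_pos hx σ).ne').congr_deriv ?_
  have := sqrt_yS_ne hx σ
  field_simp

lemma sqrt_yS_deriv' {x : ℝ} (hx : -1 < x) (σ : ℝ) :
    HasDerivAt (fun σ => √(yS x σ)) ((4 * σ ^ 3 * x + 4 * σ ^ 7) / √(yS x σ)) σ := by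
  have h : HasDerivAt (fun σ => yS x σ) (8 * σ ^ 3 * x + 8 * σ ^ 7) σ := by
    unfold yS
    refine (((((hasDerivAt_pow 4 σ).const_mul 2).mul_const x).const_add 1).fun_add (hasDerivAt_pow 8 σ)).congr_deriv ?_
    push_cast; ring
  refine (h.sqrt (yS_pos hx σ).ne').congr_deriv ?_
  have := sqrt_yS_ne hx σ
  field_simp
  ring

lemma yS_contOn (c : ℝ → ℝ) (hc : Continuous c) (n : ℕ) :
    ContinuousOn (Function.uncurry fun x σ => c σ / √(yS x σ) ^ n) (Ioi (-1) ×ˢ Icc 0 1) := by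
  unfold Function.uncurry
  refine ContinuousOn.div (by fun_prop) (by unfold yS; fun_prop) ?_
  rintro ⟨x, σ⟩ ⟨hx, _⟩
  exact pow_ne_zero n (sqrt_yS_ne hx σ)

lemma yS_cont {x : ℝ} (hx : -1 < x) (c : ℝ → ℝ) (hc : Continuous c) (n : ℕ) :
    Continuous (fun σ => c σ / √(yS x σ) ^ n) := by
  refine Continuous.div (by fun_prop) (by unfold yS; fun_prop) ?_
  intro σ
  exact pow_ne_zero n (sqrt_yS_ne hx σ)

lemma y_deriv {x : ℝ} (hx : -1 < x) : HasDerivAt yf (yd x) x := by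
  unfold yf yd
  refine paramDeriv1 (F' := fun x σ => -(4 * (1 + σ ^ 2) * σ ^ 4 / √(yS x σ) ^ 3)) (U := Ioi (-1)) zero_le_one (Ioi_mem_nhds hx) ?_ ?_ ?_
  · intro x hx
    have := (yS_cont hx (fun σ => 4 * (1 + σ ^ 2)) (by fun_prop) 1).continuousOn (s := Icc 0 1)
    simpa using this
  · exact (yS_contOn (fun σ => 4 * (1 + σ ^ 2) * σ ^ 4) (by fun_prop) 3).neg
  · intro x hx σ _
    have h := sqrt_yS_ne hx σ
    refine ((hasDerivAt_const x (4 * (1 + σ ^ 2))).fun_div (sqrt_yS_deriv hx σ) h).congr_deriv ?_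
    field_simp
    ring

lemma yd_deriv {x : ℝ} (hx : -1 < x) : HasDerivAt yd (ydd x) x := by
  unfold yd ydd
  refine paramDeriv1 (F' := fun x σ => 12 * (1 + σ ^ 2) * σ ^ 8 / √(yS x σ) ^ 5) (U := Ioi (-1)) zero_le_one (Ioi_mem_nhds hx) ?_ ?_ ?_
  · intro x hx
    exact (yS_cont hx (fun σ => 4 * (1 + σ ^ 2) * σ ^ 4) (by fun_prop) 3).neg.continuousOn
  · exact (yS_contOn (fun σ => 12 * (1 + σ ^ 2) * σ ^ 8) (by fun_prop) 5)
  · intro x hx σ _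
    have h := sqrt_yS_ne hx σ
    refine ((hasDerivAt_const x (4 * (1 + σ ^ 2) * σ ^ 4)).fun_div ((sqrt_yS_deriv hx σ).fun_pow 3) (pow_ne_zero 3 h)).fun_neg.congr_deriv ?_
    push_cast
    field_simp
    ring

lemma y_ode {x : ℝ} (hx : -1 < x) : -2 * x * yd x + (1 - x ^ 2) * ydd x = 3 / 16 * yf x := by
  have i0 : IntervalIntegrable (fun σ => 4 * (1 + σ ^ 2) / √(yS x σ)) volume 0 1 := by
    have := (yS_cont hx (fun σ => 4 * (1 + σ ^ 2)) (by fun_prop) 1)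
    simp only [pow_one] at this
    exact this.intervalIntegrable _ _
  have i1 : IntervalIntegrable (fun σ => -(4 * (1 + σ ^ 2) * σ ^ 4 / √(yS x σ) ^ 3)) volume 0 1 :=
    (yS_cont hx (fun σ => 4 * (1 + σ ^ 2) * σ ^ 4) (by fun_prop) 3).neg.intervalIntegrable _ _
  have i2 : IntervalIntegrable (fun σ => 12 * (1 + σ ^ 2) * σ ^ 8 / √(yS x σ) ^ 5) volume 0 1 :=
    (yS_cont hx (fun σ => 12 * (1 + σ ^ 2) * σ ^ 8) (by fun_prop) 5).intervalIntegrable _ _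
  have key : ∫ σ in (0:ℝ)..1, (-2 * x * -(4 * (1 + σ ^ 2) * σ ^ 4 / √(yS x σ) ^ 3) +
      (1 - x ^ 2) * (12 * (1 + σ ^ 2) * σ ^ 8 / √(yS x σ) ^ 5) - 3 / 16 * (4 * (1 + σ ^ 2) / √(yS x σ))) = 0 := by
    rw [intervalIntegral.integral_eq_sub_of_hasDerivAt
      (f := fun σ => -(1/4) * ((3 * σ + σ ^ 3) / √(yS x σ) - (σ + σ ^ 3) * (4 * σ ^ 4 * x + 4 * σ ^ 8) / √(yS x σ) ^ 3))]
    · have h := sqrt_yS_ne hx 1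
      have h2 := Real.sq_sqrt (yS_pos hx 1).le
      have h3 : yS x 1 = 2 + 2 * x := by unfold yS; ring
      have h4 : √(yS x 1) ^ 2 = 2 + 2 * x := by rw [h2, h3]
      field_simp
      rw [h4]
      ring
    · intro σ _
      have h := sqrt_yS_ne hx σ
      have hd := sqrt_yS_deriv' hx σ
      have h2 := Real.sq_sqrt (yS_pos hx σ).le
      have h3 : √(yS x σ) ^ 2 = 1 + 2 * σ ^ 4 * x + σ ^ 8 := h2
      have p1 : HasDerivAt (fun σ : ℝ => 3 * σ + σ ^ 3) (3 + 3 * σ ^ 2) σ :=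
        (((hasDerivAt_id σ).const_mul 3).fun_add (hasDerivAt_pow 3 σ)).congr_deriv (by push_cast; ring)
      have p2 : HasDerivAt (fun σ : ℝ => (σ + σ ^ 3) * (4 * σ ^ 4 * x + 4 * σ ^ 8))
          ((1 + 3 * σ ^ 2) * (4 * σ ^ 4 * x + 4 * σ ^ 8) + (σ + σ ^ 3) * (16 * σ ^ 3 * x + 32 * σ ^ 7)) σ :=
        (((hasDerivAt_id σ).fun_add (hasDerivAt_pow 3 σ)).fun_mul
          ((((hasDerivAt_pow 4 σ).const_mul 4).mul_const x).fun_add ((hasDerivAt_pow 8 σ).const_mul 4))).congr_deriv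
          (by push_cast; simp only [id]; ring)
      refine (((p1.fun_div hd h).fun_sub (p2.fun_div (hd.fun_pow 3) (pow_ne_zero 3 h))).const_mul (-(1/4))).congr_deriv ?_
      set S := √(yS x σ)
      have h4 : S ^ 4 = (1 + 2 * σ ^ 4 * x + σ ^ 8) ^ 2 := by rw [← h3]; ring
      push_cast
      field_simp
      simp only [h3, h4]
      ring
    · exact ((i1.const_mul _).add (i2.const_mul _)).sub (i0.const_mul _)
  rw [intervalIntegral.integral_sub ((i1.const_mul _).add (i2.const_mul _)) (i0.const_mul _),
    intervalIntegral.integral_add (i1.const_mul _) (i2.const_mul _)] at key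
  simp only [intervalIntegral.integral_const_mul] at key
  unfold yd ydd yf
  linarith

lemma YY_deriv {x : ℝ} (hx : -1 < x) : HasDerivAt YY (3 / 16 * yf x) x := by
  unfold YY
  rw [← y_ode hx]
  refine (((hasDerivAt_pow 2 x).const_sub 1).fun_mul (yd_deriv hx)).congr_deriv ?_
  push_cast; ring

lemma yS_lb {x σ : ℝ} (h1 : -1 < x) (hx : x ≤ 1) : (1 + x) / 2 ≤ yS x σ := by
  have h : yS x σ = (1 + x) * (1 + σ ^ 4) ^ 2 / 2 + (1 - x) * (1 - σ ^ 4) ^ 2 / 2 := by unfold yS; ring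
  have h4 : 0 ≤ σ ^ 4 := by positivity
  nlinarith [mul_nonneg (show (0:ℝ) ≤ 1 - x by linarith) (sq_nonneg (1 - σ ^ 4)),
    mul_nonneg (show (0:ℝ) ≤ 1 + x by linarith) (show 0 ≤ (1 + σ ^ 4) ^ 2 - 1 by nlinarith)]

lemma yS_lb2 {x σ : ℝ} (hx : -1 < x) (hx0 : x ≤ 0) (h0 : 0 ≤ σ) (h1 : σ ≤ 1) : ((1 - σ) / 2) ^ 2 ≤ yS x σ := by
  have h : yS x σ = (1 + x) * (1 + σ ^ 4) ^ 2 / 2 + (1 - x) * (1 - σ ^ 4) ^ 2 / 2 := by unfold yS; ring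
  have h4 : 1 - σ ≤ 1 - σ ^ 4 := by
    have := pow_le_of_le_one h0 h1 (show 4 ≠ 0 by norm_num)
    linarith
  have h5 : (1 - σ) ^ 2 ≤ (1 - σ ^ 4) ^ 2 := by
    apply pow_le_pow_left₀ (by linarith) h4
  nlinarith [mul_nonneg (show (0:ℝ) ≤ 1 + x by linarith) (sq_nonneg (1 + σ ^ 4)),
    mul_nonneg (show (0:ℝ) ≤ - x by linarith) (sq_nonneg (1 - σ ^ 4)), sq_nonneg (1 - σ)]

lemma sqrt_S_lb {x σ : ℝ} (hx0 : -1 < x) (hx : x ≤ 1) : √(1 + x) ≤ √2 * √(yS x σ) := by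
  rw [← Real.sqrt_mul (by norm_num)]
  apply Real.sqrt_le_sqrt
  have := yS_lb (σ := σ) hx0 hx
  linarith

lemma S_neg_one_ne {σ : ℝ} (h0 : 0 ≤ σ) (h1 : σ < 1) : √(yS (-1) σ) ≠ 0 := by
  apply ne_of_gt
  apply Real.sqrt_pos.2
  have h : yS (-1) σ = (1 - σ ^ 4) ^ 2 := by unfold yS; ring
  rw [h]
  have := pow_lt_one₀ h0 h1 (show 4 ≠ 0 by norm_num)
  apply pow_pos; linarith

lemma ae_ne_one : ∀ᵐ σ : ℝ, σ ≠ 1 := by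
  have : (volume : Measure ℝ) {1} = 0 := by simp
  exact (compl_mem_ae_iff.2 this)

lemma ev_mem (a : ℝ) (h : -1 < a) : ∀ᶠ x in 𝓝[>] (-1:ℝ), -1 < x ∧ x < a := by
  have := Ioo_mem_nhdsGT h
  filter_upwards [this] with x hx using hx

lemma y_lim0 : Tendsto (fun x => √(1 + x) * yf x) (𝓝[>] (-1)) (𝓝 0) := by
  have : Tendsto (fun x => ∫ σ in (0:ℝ)..1, √(1 + x) * (4 * (1 + σ ^ 2) / √(yS x σ))) (𝓝[>] (-1))
      (𝓝 (∫ σ in (0:ℝ)..1, (0:ℝ))) := by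
    apply intervalIntegral.tendsto_integral_filter_of_dominated_convergence (fun _ => 8 * √2)
    · filter_upwards [ev_mem 0 (by norm_num)] with x hx
      have := (yS_cont hx.1 (fun σ => 4 * (1 + σ ^ 2)) (by fun_prop) 1).const_mul (√(1 + x))
      simp only [pow_one] at this
      exact this.aestronglyMeasurable
    · filter_upwards [ev_mem 0 (by norm_num)] with x hx
      refine Eventually.of_forall fun σ hσ => ?_
      rw [uIoc_of_le zero_le_one] at hσ
      have hS := Real.sqrt_pos.2 (yS_pos hx.1 σ)
      have hb := sqrt_S_lb (σ := σ) hx.1 (by linarith [hx.2])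
      rw [Real.norm_of_nonneg (by positivity), ← mul_div_assoc, div_le_iff₀ hS]
      have h1 : 1 + σ ^ 2 ≤ 2 := by nlinarith [hσ.1, hσ.2]
      calc √(1 + x) * (4 * (1 + σ ^ 2)) ≤ (√2 * √(yS x σ)) * (4 * 2) := by gcongr
        _ = _ := by ring
    · simp
    · filter_upwards [ae_ne_one] with σ h1 hσ
      rw [uIoc_of_le zero_le_one] at hσ
      have hne := S_neg_one_ne hσ.1.le (lt_of_le_of_ne hσ.2 h1)
      have : ContinuousAt (fun x => √(1 + x) * (4 * (1 + σ ^ 2) / √(yS x σ))) (-1) := by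
        refine ContinuousAt.mul (by fun_prop) (ContinuousAt.div (by fun_prop) (by unfold yS; fun_prop) hne)
      have h2 := this.tendsto.mono_left (nhdsWithin_le_nhds (s := Ioi (-1)))
      simpa using h2
  simp only [intervalIntegral.integral_const_mul, intervalIntegral.integral_zero] at this
  exact this

lemma YY_eq {x : ℝ} (hx : -1 < x) : YY x = -2 * ((1 + x) / √(2 + 2 * x) - x) +
    ∫ σ in (0:ℝ)..1, (1 - x ^ 2) * (4 * σ ^ 3 * (2 - σ - σ ^ 3) / √(yS x σ) ^ 3) := by
  have i1 : IntervalIntegrable (fun σ => (4 * σ ^ 3 / √(yS x σ) ^ 3)) volume 0 1 :=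
    (yS_cont hx (fun σ => 4 * σ ^ 3) (by fun_prop) 3).intervalIntegrable _ _
  have i2 : IntervalIntegrable (fun σ => (4 * σ ^ 3 * (2 - σ - σ ^ 3) / √(yS x σ) ^ 3)) volume 0 1 :=
    (yS_cont hx (fun σ => 4 * σ ^ 3 * (2 - σ - σ ^ 3)) (by fun_prop) 3).intervalIntegrable _ _
  have e1 : ∫ σ in (0:ℝ)..1, (1 - x ^ 2) * (4 * σ ^ 3 / √(yS x σ) ^ 3) = (1 + x) / √(2 + 2 * x) - x := by
    rw [intervalIntegral.integral_eq_sub_of_hasDerivAt (f := fun σ => (σ ^ 4 + x) / √(yS x σ)) _ (i1.const_mul _)]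
    · have h1 : yS x 1 = 2 + 2 * x := by unfold yS; ring
      have h0 : yS x 0 = 1 := by unfold yS; ring
      simp only [h1, h0]
      norm_num
    · intro σ _
      have h := sqrt_yS_ne hx σ
      have hd := sqrt_yS_deriv' hx σ
      have h3 : √(yS x σ) ^ 2 = 1 + 2 * σ ^ 4 * x + σ ^ 8 := Real.sq_sqrt (yS_pos hx σ).le
      refine (((hasDerivAt_pow 4 σ).add_const x).fun_div hd h).congr_deriv ?_
      push_cast
      field_simp
      rw [h3]
      ring
  have e2 : YY x = ∫ σ in (0:ℝ)..1, (-2 * ((1 - x ^ 2) * (4 * σ ^ 3 / √(yS x σ) ^ 3)) +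
      (1 - x ^ 2) * (4 * σ ^ 3 * (2 - σ - σ ^ 3) / √(yS x σ) ^ 3)) := by
    unfold YY yd
    rw [← intervalIntegral.integral_const_mul]
    congr 1
    ext σ
    have h := sqrt_yS_ne hx σ
    field_simp
    ring
  rw [e2, intervalIntegral.integral_add ((i1.const_mul _).const_mul _) (i2.const_mul _),
    intervalIntegral.integral_const_mul, e1]

lemma YY_lim : Tendsto YY (𝓝[>] (-1)) (𝓝 (-2)) := by
  have h1 : Tendsto (fun x => ∫ σ in (0:ℝ)..1, (1 - x ^ 2) * (4 * σ ^ 3 * (2 - σ - σ ^ 3) / √(yS x σ) ^ 3)) (𝓝[>] (-1))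
      (𝓝 (∫ σ in (0:ℝ)..1, (0:ℝ))) := by
    apply intervalIntegral.tendsto_integral_filter_of_dominated_convergence (fun _ => 128)
    · filter_upwards [ev_mem 0 (by norm_num)] with x hx
      exact ((yS_cont hx.1 (fun σ => 4 * σ ^ 3 * (2 - σ - σ ^ 3)) (by fun_prop) 3).const_mul _).aestronglyMeasurable
    · filter_upwards [ev_mem 0 (by norm_num)] with x hx
      refine Eventually.of_forall fun σ hσ => ?_
      rw [uIoc_of_le zero_le_one] at hσ
      have hS := Real.sqrt_pos.2 (yS_pos hx.1 σ)
      have h3 : √(yS x σ) ^ 2 = yS x σ := Real.sq_sqrt (yS_pos hx.1 σ).le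
      have hb : (1 - σ) / 2 ≤ √(yS x σ) := by
        apply Real.le_sqrt_of_sq_le
        exact yS_lb2 hx.1 hx.2.le hσ.1.le hσ.2
      have hb2 := yS_lb (x := x) (σ := σ) hx.1 (by linarith [hx.2])
      have hs3 : σ ^ 3 ≤ 1 := pow_le_one₀ hσ.1.le hσ.2
      have hs0 : 0 < σ ^ 3 := pow_pos hσ.1 3
      have hk : 2 - σ - σ ^ 3 = (1 - σ) * (σ ^ 2 + σ + 2) := by ring
      have hk0 : 0 ≤ 2 - σ - σ ^ 3 := by linarith [hσ.2]
      have hk1 : 2 - σ - σ ^ 3 ≤ (1 - σ) * 4 := by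
        rw [hk]; apply mul_le_mul_of_nonneg_left _ (by linarith [hσ.2]); nlinarith [hσ.1, hσ.2]
      have hp : 0 ≤ 1 - x ^ 2 := by nlinarith [hx.1, hx.2]
      rw [Real.norm_of_nonneg (by positivity), ← mul_div_assoc, div_le_iff₀ (by positivity)]
      have hc : (1 - σ) / 2 * ((1 + x) / 2) ≤ √(yS x σ) ^ 3 := by
        rw [show √(yS x σ) ^ 3 = √(yS x σ) * √(yS x σ) ^ 2 by ring, h3]
        have : 0 ≤ (1 + x) / 2 := by linarith [hx.1]
        gcongr
      have hp2 : 1 - x ^ 2 ≤ 2 * (1 + x) := by nlinarith [hx.1, hx.2]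
      have hp4 : 0 ≤ 2 * (1 + x) := by linarith [hx.1]
      have hp3 : 0 ≤ 1 - σ := by linarith [hσ.2]
      calc (1 - x ^ 2) * (4 * σ ^ 3 * (2 - σ - σ ^ 3)) ≤ (2 * (1 + x)) * (4 * 1 * ((1 - σ) * 4)) := by gcongr
        _ = 128 * ((1 - σ) / 2 * ((1 + x) / 2)) := by ring
        _ ≤ _ := by gcongr
    · simp
    · filter_upwards [ae_ne_one] with σ h1 hσ
      rw [uIoc_of_le zero_le_one] at hσ
      have hne := S_neg_one_ne hσ.1.le (lt_of_le_of_ne hσ.2 h1)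
      have : ContinuousAt (fun x => (1 - x ^ 2) * (4 * σ ^ 3 * (2 - σ - σ ^ 3) / √(yS x σ) ^ 3)) (-1) := by
        refine ContinuousAt.mul (by fun_prop) (ContinuousAt.div (by fun_prop) (by unfold yS; fun_prop) (pow_ne_zero 3 hne))
      have h2 := this.tendsto.mono_left (nhdsWithin_le_nhds (s := Ioi (-1)))
      simpa using h2
  have h2 : Tendsto (fun x : ℝ => -2 * (√(1 + x) / √2 - x)) (𝓝[>] (-1)) (𝓝 (-2)) := by
    have : Continuous (fun x : ℝ => -2 * (√(1 + x) / √2 - x)) := by fun_prop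
    have h2 := (this.tendsto (-1)).mono_left (nhdsWithin_le_nhds (s := Ioi (-1)))
    simpa using h2
  have h3 := h2.add h1
  simp only [intervalIntegral.integral_zero, add_zero] at h3
  refine h3.congr' ?_
  filter_upwards [ev_mem 0 (by norm_num)] with x hx
  rw [YY_eq hx.1, show 2 + 2 * x = 2 * (1 + x) by ring, Real.sqrt_mul (by norm_num)]
  have h5 : 0 < √(1 + x) := Real.sqrt_pos.2 (by linarith [hx.1])
  have h6 : √(1 + x) ^ 2 = 1 + x := Real.sq_sqrt (by linarith [hx.1])
  congr 3
  nth_rewrite 2 [← h6]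
  field_simp

lemma YY_bound {x : ℝ} (h0 : 0 ≤ x) (h1 : x < 1) : |YY x| ≤ 16 * (1 - x) := by
  have h : ‖yd x‖ ≤ 8 * |(1:ℝ) - 0| := by
    unfold yd
    apply intervalIntegral.norm_integral_le_of_norm_le_const
    intro σ hσ
    rw [uIoc_of_le zero_le_one] at hσ
    have hS : 1 ≤ √(yS x σ) := by
      rw [Real.one_le_sqrt]; unfold yS
      have : 0 ≤ σ ^ 4 * x := by positivity
      have : 0 ≤ σ ^ 8 := by positivity
      linarith
    rw [norm_neg, Real.norm_of_nonneg (by positivity), div_le_iff₀ (by positivity)]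
    have h3 : 1 ≤ √(yS x σ) ^ 3 := one_le_pow₀ hS
    have h4 : σ ^ 4 ≤ 1 := pow_le_one₀ hσ.1.le hσ.2
    have h5 : σ ^ 2 ≤ 1 := pow_le_one₀ hσ.1.le hσ.2
    calc 4 * (1 + σ ^ 2) * σ ^ 4 ≤ 4 * (1 + 1) * 1 := by gcongr
      _ ≤ 8 * √(yS x σ) ^ 3 := by linarith
  unfold YY
  rw [abs_mul, abs_of_nonneg (show 0 ≤ 1 - x ^ 2 by nlinarith)]
  rw [Real.norm_eq_abs] at h
  norm_num at h
  have : 1 - x ^ 2 ≤ 2 * (1 - x) := by nlinarith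
  calc (1 - x ^ 2) * |yd x| ≤ (2 * (1 - x)) * 8 := by
        apply mul_le_mul this h (abs_nonneg _) (by linarith)
    _ = _ := by ring

lemma yf_one : yf 1 = √2 * π := by
  have hs : √2 ^ 2 = (2:ℝ) := Real.sq_sqrt (by norm_num)
  have h : ∀ σ : ℝ, √(yS 1 σ) = 1 + σ ^ 4 := by
    intro σ
    rw [show yS 1 σ = (1 + σ ^ 4) ^ 2 by unfold yS; ring, Real.sqrt_sq (by positivity)]
  unfold yf
  simp only [h]
  rw [intervalIntegral.integral_eq_sub_of_hasDerivAt
    (f := fun σ => 4 / √2 * (Real.arctan (√2 * σ + 1) + Real.arctan (√2 * σ - 1)))]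
  · have h1 : Real.arctan (√2 * 1 + 1) + Real.arctan (√2 * 1 - 1) = π / 2 := by
      have : √2 * 1 - 1 = (√2 * 1 + 1)⁻¹ := by
        have : √2 + 1 ≠ 0 := by positivity
        rw [mul_one]
        field_simp
        nlinarith
      rw [this, Real.arctan_inv_of_pos (by positivity)]
      ring
    have h0 : Real.arctan (√2 * 0 + 1) + Real.arctan (√2 * 0 - 1) = 0 := by
      rw [show √2 * 0 - 1 = -(√2 * 0 + 1) by ring, Real.arctan_neg]; ring
    simp only [h1, h0]
    field_simp
    rw [hs]; ring
  · intro σ _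
    have d1 : HasDerivAt (fun σ => √2 * σ + 1) (√2) σ := by
      simpa using ((hasDerivAt_id σ).const_mul (√2)).add_const 1
    have d2 : HasDerivAt (fun σ => √2 * σ - 1) (√2) σ := by
      simpa using ((hasDerivAt_id σ).const_mul (√2)).sub_const 1
    refine ((d1.arctan.fun_add d2.arctan).const_mul (4 / √2)).congr_deriv ?_
    have p1 : 0 < 1 + (√2 * σ + 1) ^ 2 := by positivity
    have p2 : 0 < 1 + (√2 * σ - 1) ^ 2 := by positivity
    have p3 : (1 + (√2 * σ + 1) ^ 2) * (1 + (√2 * σ - 1) ^ 2) = 4 * (1 + σ ^ 4) := by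
      ring_nf
      rw [show √2 ^ 4 = (√2 ^ 2) ^ 2 by ring, hs]; ring
    have p4 : (1 + (√2 * σ + 1) ^ 2) + (1 + (√2 * σ - 1) ^ 2) = 4 * (1 + σ ^ 2) := by
      ring_nf
      rw [hs]; ring
    have p5 : 0 < 1 + σ ^ 4 := by positivity
    rw [div_mul_eq_mul_div, div_eq_div_iff (by positivity) (by positivity)]
    rw [show (1 / (1 + (√2 * σ + 1) ^ 2) * √2 + 1 / (1 + (√2 * σ - 1) ^ 2) * √2) =
      √2 * ((1 + (√2 * σ + 1) ^ 2) + (1 + (√2 * σ - 1) ^ 2)) / ((1 + (√2 * σ + 1) ^ 2) * (1 + (√2 * σ - 1) ^ 2)) by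
        field_simp; ring, p3, p4]
    field_simp
  · refine Continuous.intervalIntegrable ?_ _ _
    refine Continuous.div (by fun_prop) (by fun_prop) fun σ => by positivity

noncomputable def uu (x : ℝ) : ℝ := yf x * yf (-x)
noncomputable def vv (x : ℝ) : ℝ := YY x * yf (-x) - yf x * YY (-x)
noncomputable def ZZ (x : ℝ) : ℝ := -(YY x * YY (-x))

lemma uu_neg (x : ℝ) : uu (-x) = uu x := by unfold uu; rw [neg_neg, mul_comm]
lemma vv_neg (x : ℝ) : vv (-x) = -vv x := by unfold vv; rw [neg_neg]; ring
lemma ZZ_neg (x : ℝ) : ZZ (-x) = ZZ x := by unfold ZZ; rw [neg_neg, mul_comm]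
lemma uu_nonneg (x : ℝ) : 0 ≤ uu x := mul_nonneg (yf_nonneg _) (yf_nonneg _)

lemma uvZ_deriv {x : ℝ} (h : x ∈ Ioo (-1:ℝ) 1) :
    HasDerivAt uu (vv x / (1 - x ^ 2)) x ∧
    HasDerivAt vv (3 / 8 * uu x + 2 * ZZ x / (1 - x ^ 2)) x ∧ HasDerivAt ZZ (3 / 16 * vv x) x := by
  have hp : 1 - x ^ 2 ≠ 0 := by nlinarith [h.1, h.2]
  have hn : -1 < -x := by linarith [h.2]
  have d1 := y_deriv h.1
  have d2 := YY_deriv h.1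
  have d3 : HasDerivAt (fun x => yf (-x)) (-yd (-x)) x := by
    exact (HasDerivAt.comp x (y_deriv hn) (hasDerivAt_neg x)).congr_deriv (by ring)
  have d4 : HasDerivAt (fun x => YY (-x)) (-(3 / 16 * yf (-x))) x := by
    exact (HasDerivAt.comp x (YY_deriv hn) (hasDerivAt_neg x)).congr_deriv (by ring)
  have e1 : yd x = YY x / (1 - x ^ 2) := by unfold YY; field_simp
  have e2 : yd (-x) = YY (-x) / (1 - x ^ 2) := by unfold YY; rw [neg_sq]; field_simp
  unfold uu vv ZZ
  refine ⟨(d1.fun_mul d3).congr_deriv ?_, ((d2.fun_mul d3).fun_sub (d1.fun_mul d4)).congr_deriv ?_,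
    (d2.fun_mul d4).fun_neg.congr_deriv ?_⟩
  · rw [e1, e2]; field_simp; ring
  · rw [e1, e2]; field_simp; ring
  · ring

lemma yf_lim1 : Tendsto (fun x => yf (-x)) (𝓝[>] (-1)) (𝓝 (√2 * π)) := by
  have h : ContinuousAt yf 1 := (y_deriv (by norm_num)).continuousAt
  have h2 : Tendsto (fun x : ℝ => -x) (𝓝[>] (-1)) (𝓝 1) := by
    have := (continuous_neg.tendsto (-1:ℝ)).mono_left (nhdsWithin_le_nhds (s := Ioi (-1)))
    simpa using this
  rw [← yf_one]
  exact h.tendsto.comp h2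

lemma sqrt_lim : Tendsto (fun x : ℝ => √(1 + x)) (𝓝[>] (-1)) (𝓝 0) := by
  have : Continuous (fun x : ℝ => √(1 + x)) := by fun_prop
  have h2 := (this.tendsto (-1)).mono_left (nhdsWithin_le_nhds (s := Ioi (-1)))
  simpa using h2

lemma YYn_bound : ∀ᶠ x in 𝓝[>] (-1:ℝ), |YY (-x)| ≤ 16 * (1 + x) := by
  filter_upwards [ev_mem 0 (by norm_num)] with x hx
  have := YY_bound (x := -x) (by linarith [hx.2]) (by linarith [hx.1])
  simpa using this

lemma uu_limL : Tendsto (fun x => √(1 - x ^ 2) * uu x) (𝓝[>] (-1)) (𝓝 0) := by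
  have h1 : Tendsto (fun x : ℝ => √(1 - x)) (𝓝[>] (-1)) (𝓝 (√(1 - -1))) := by
    have : Continuous (fun x : ℝ => √(1 - x)) := by fun_prop
    exact (this.tendsto (-1)).mono_left (nhdsWithin_le_nhds (s := Ioi (-1)))
  have h := (y_lim0.mul h1).mul yf_lim1
  simp only [zero_mul] at h
  refine h.congr' ?_
  filter_upwards [ev_mem 0 (by norm_num)] with x hx
  unfold uu
  rw [show 1 - x ^ 2 = (1 + x) * (1 - x) by ring, Real.sqrt_mul (by linarith [hx.1])]
  ring

lemma vv_limL : Tendsto vv (𝓝[>] (-1)) (𝓝 (-(2 * √2 * π))) := by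
  have h1 : Tendsto (fun x => yf x * YY (-x)) (𝓝[>] (-1)) (𝓝 0) := by
    have hb := (y_lim0.mul sqrt_lim).mul_const 16
    simp only [mul_zero, zero_mul] at hb
    refine squeeze_zero_norm' ?_ hb
    filter_upwards [YYn_bound, ev_mem 0 (by norm_num)] with x hx hx2
    rw [norm_mul, Real.norm_of_nonneg (yf_nonneg x), Real.norm_eq_abs]
    have h6 : √(1 + x) ^ 2 = 1 + x := Real.sq_sqrt (by linarith [hx2.1])
    calc yf x * |YY (-x)| ≤ yf x * (16 * (1 + x)) := mul_le_mul_of_nonneg_left hx (yf_nonneg x)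
      _ = yf x * (16 * √(1 + x) ^ 2) := by rw [h6]
      _ = _ := by ring
  have := (YY_lim.mul yf_lim1).sub h1
  refine (this.congr fun x => rfl).trans ?_
  rw [show -2 * (√2 * π) - 0 = -(2 * √2 * π) by ring]

lemma ZZ_limL : Tendsto (fun x => ZZ x / √(1 - x ^ 2)) (𝓝[>] (-1)) (𝓝 0) := by
  have hb := (YY_lim.norm.mul sqrt_lim).mul_const 16
  simp only [mul_zero, zero_mul] at hb
  refine squeeze_zero_norm' ?_ hb
  filter_upwards [YYn_bound, ev_mem 0 (by norm_num)] with x hx hx2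
  have hp : 0 < √(1 - x ^ 2) := Real.sqrt_pos.2 (by nlinarith [hx2.1, hx2.2])
  have h6 : √(1 + x) ^ 2 = 1 + x := Real.sq_sqrt (by linarith [hx2.1])
  unfold ZZ
  rw [norm_div, norm_neg, norm_mul, Real.norm_of_nonneg hp.le, div_le_iff₀ hp]
  rw [← Real.norm_eq_abs] at hx
  have h7 : √(1 + x) ≤ √(1 - x ^ 2) := Real.sqrt_le_sqrt (by nlinarith [hx2.1, hx2.2])
  calc ‖YY x‖ * ‖YY (-x)‖ ≤ ‖YY x‖ * (16 * (1 + x)) := by gcongr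
    _ = ‖YY x‖ * √(1 + x) * 16 * √(1 + x) := by nth_rewrite 1 [← h6]; ring
    _ ≤ _ := by gcongr

lemma neg_lim : Tendsto (fun x : ℝ => -x) (𝓝[<] 1) (𝓝[>] (-1)) := tendsto_neg_nhdsLT

lemma uu_limR : Tendsto (fun x => √(1 - x ^ 2) * uu x) (𝓝[<] 1) (𝓝 0) := by
  have := uu_limL.comp neg_lim
  refine this.congr fun x => ?_
  simp [uu_neg]

lemma vv_limR : Tendsto vv (𝓝[<] 1) (𝓝 (2 * √2 * π)) := by
  have := (vv_limL.comp neg_lim).neg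
  rw [neg_neg] at this
  refine this.congr fun x => ?_
  simp [vv_neg]

lemma ZZ_limR : Tendsto (fun x => ZZ x / √(1 - x ^ 2)) (𝓝[<] 1) (𝓝 0) := by
  have := ZZ_limL.comp neg_lim
  refine this.congr fun x => ?_
  simp [ZZ_neg]

lemma yf_bound {x : ℝ} (hx : -1 < x) (hx1 : x ≤ 1) : √(1 + x) * yf x ≤ 8 * √2 := by
  have h : ‖∫ σ in (0:ℝ)..1, √(1 + x) * (4 * (1 + σ ^ 2) / √(yS x σ))‖ ≤ 8 * √2 * |(1:ℝ) - 0| := by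
    apply intervalIntegral.norm_integral_le_of_norm_le_const
    intro σ hσ
    rw [uIoc_of_le zero_le_one] at hσ
    have hS := Real.sqrt_pos.2 (yS_pos hx σ)
    have hb := sqrt_S_lb (σ := σ) hx hx1
    rw [Real.norm_of_nonneg (by positivity), ← mul_div_assoc, div_le_iff₀ hS]
    have h1 : 1 + σ ^ 2 ≤ 2 := by nlinarith [hσ.1, hσ.2]
    calc √(1 + x) * (4 * (1 + σ ^ 2)) ≤ (√2 * √(yS x σ)) * (4 * 2) := by gcongr
      _ = _ := by ring
  rw [intervalIntegral.integral_const_mul] at h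
  norm_num at h
  have h2 : |yf x| = yf x := abs_of_nonneg (yf_nonneg x)
  unfold yf at h2 ⊢
  rw [h2, abs_of_nonneg (Real.sqrt_nonneg _)] at h
  exact h

lemma uu_cont : ContinuousOn uu (Ioo (-1) 1) := fun _ hx =>
  (uvZ_deriv hx).1.continuousAt.continuousWithinAt

lemma uu_int : IntervalIntegrable uu volume (-1) 1 := by
  rw [intervalIntegrable_iff_integrableOn_Ioo_of_le (by norm_num)]
  have h1 : IntegrableOn (fun x : ℝ => 1 / √(1 - x ^ 2)) (Ioo (-1) 1) := by
    refine IntegrableOn.mono_set (t := Ioc (-1) 1) ?_ Ioo_subset_Ioc_self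
    refine intervalIntegral.integrableOn_deriv_of_nonneg (g := Real.arcsin) Real.continuous_arcsin.continuousOn ?_ ?_
    · intro x hx
      exact Real.hasDerivAt_arcsin hx.1.ne' hx.2.ne
    · intro x _; positivity
  refine Integrable.mono' (h1.const_mul 128) (uu_cont.aestronglyMeasurable measurableSet_Ioo) ?_
  refine (ae_restrict_iff' measurableSet_Ioo).2 (Eventually.of_forall fun x hx => ?_)
  have b1 := yf_bound hx.1 hx.2.le
  have b2 := yf_bound (x := -x) (by linarith [hx.2]) (by linarith [hx.1])
  have hp : 0 < √(1 - x ^ 2) := Real.sqrt_pos.2 (by nlinarith [hx.1, hx.2])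
  rw [Real.norm_of_nonneg (uu_nonneg x), mul_one_div, le_div_iff₀ hp]
  have h3 : √(1 - x ^ 2) = √(1 + x) * √(1 + -x) := by
    rw [← Real.sqrt_mul (by linarith [hx.1])]; congr 1; ring
  have hs : √2 ^ 2 = (2:ℝ) := Real.sq_sqrt (by norm_num)
  unfold uu
  calc yf x * yf (-x) * √(1 - x ^ 2) = (√(1 + x) * yf x) * (√(1 + -x) * yf (-x)) := by rw [h3]; ring
    _ ≤ (8 * √2) * (8 * √2) := mul_le_mul b1 b2 (mul_nonneg (by positivity) (yf_nonneg _)) (by positivity)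
    _ = 64 * √2 ^ 2 := by ring
    _ = 128 := by rw [hs]; norm_num

noncomputable def BB (f f2 f3 : ℝ → ℝ) (x : ℝ) : ℝ :=
  -(uu x * f3 x) + vv x * f2 x - 2 * (ZZ x * f x) + 3 / 8 * ((1 - x ^ 2) * uu x * f x)

lemma BB_deriv {f f2 f3 : ℝ → ℝ} {f3' x : ℝ} (hx : x ∈ Ioo (-1:ℝ) 1)
    (hf : HasDerivAt f (f2 x / (1 - x ^ 2)) x) (hf2 : HasDerivAt f2 (f3 x / (1 - x ^ 2)) x)
    (hf3 : HasDerivAt f3 f3' x) :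
    HasDerivAt (BB f f2 f3) (uu x * (-f3' + 3 / 4 * (f2 x - x * f x))) x := by
  obtain ⟨hu, hv, hZ⟩ := uvZ_deriv hx
  have hp : 1 - x ^ 2 ≠ 0 := by nlinarith [hx.1, hx.2]
  have hpd : HasDerivAt (fun x : ℝ => 1 - x ^ 2) (-2 * x) x :=
    ((hasDerivAt_pow 2 x).const_sub 1).congr_deriv (by push_cast; ring)
  unfold BB
  refine ((((hu.fun_mul hf3).fun_neg.fun_add (hv.fun_mul hf2)).fun_sub ((hZ.fun_mul hf).const_mul 2)).fun_add
    (((hpd.fun_mul hu).fun_mul hf).const_mul (3 / 8))).congr_deriv ?_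
  field_simp
  ring

lemma BB_lim {l : Filter ℝ} {f f2 f3 : ℝ → ℝ} {V l2 l3 lf : ℝ}
    (hl : ∀ᶠ x in l, x ∈ Ioo (-1:ℝ) 1)
    (hu : Tendsto (fun x => √(1 - x ^ 2) * uu x) l (𝓝 0)) (hv : Tendsto vv l (𝓝 V))
    (hZ : Tendsto (fun x => ZZ x / √(1 - x ^ 2)) l (𝓝 0))
    (hf : Tendsto (fun x => √(1 - x ^ 2) * f x) l (𝓝 lf)) (h2 : Tendsto f2 l (𝓝 l2))
    (h3 : Tendsto (fun x => f3 x / √(1 - x ^ 2)) l (𝓝 l3)) :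
    Tendsto (BB f f2 f3) l (𝓝 (V * l2)) := by
  have := (((hu.mul h3).neg.add (hv.mul h2)).sub ((hZ.mul hf).const_mul 2)).add ((hu.mul hf).const_mul (3 / 8))
  simp only [zero_mul, mul_zero, neg_zero, zero_add, sub_zero, add_zero] at this
  refine this.congr' ?_
  filter_upwards [hl] with x hx
  have hp0 : 0 < 1 - x ^ 2 := by nlinarith [hx.1, hx.2]
  have hp : 0 < √(1 - x ^ 2) := Real.sqrt_pos.2 hp0
  have hs : √(1 - x ^ 2) ^ 2 = 1 - x ^ 2 := Real.sq_sqrt hp0.le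
  unfold BB
  nth_rewrite 7 [← hs]
  field_simp

lemma evL : ∀ᶠ x in 𝓝[>] (-1:ℝ), x ∈ Ioo (-1:ℝ) 1 := Ioo_mem_nhdsGT (by norm_num)
lemma evR : ∀ᶠ x in 𝓝[<] (1:ℝ), x ∈ Ioo (-1:ℝ) 1 := Ioo_mem_nhdsLT (by norm_num)

lemma W_pos {r x : ℝ} (hr : r ∈ Ioo (-1:ℝ) 1) (hx : x ∈ Icc (-1:ℝ) 1) : 0 < 1 - 2 * r * x + r ^ 2 := by
  have h1 : r ^ 2 < 1 := by nlinarith [hr.1, hr.2]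
  have h2 : x ^ 2 ≤ 1 := by nlinarith [hx.1, hx.2]
  nlinarith [sq_nonneg (r - x), mul_nonneg (sq_nonneg r) (sub_nonneg.2 h2)]

noncomputable def SS (r x : ℝ) : ℝ := √(1 - 2 * r * x + r ^ 2)
lemma SS_pos {r x : ℝ} (hr : r ∈ Ioo (-1:ℝ) 1) (hx : x ∈ Icc (-1:ℝ) 1) : 0 < SS r x := Real.sqrt_pos.2 (W_pos hr hx)
lemma SS_sq {r x : ℝ} (hr : r ∈ Ioo (-1:ℝ) 1) (hx : x ∈ Icc (-1:ℝ) 1) : SS r x ^ 2 = 1 - 2 * r * x + r ^ 2 :=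
  Real.sq_sqrt (W_pos hr hx).le

lemma SS_dx {r x : ℝ} (hr : r ∈ Ioo (-1:ℝ) 1) (hx : x ∈ Icc (-1:ℝ) 1) :
    HasDerivAt (fun x => SS r x) (-r / SS r x) x := by
  have h : HasDerivAt (fun x => 1 - 2 * r * x + r ^ 2) (-(2 * r)) x :=
    ((((hasDerivAt_id x).const_mul (2 * r)).const_sub 1).add_const (r ^ 2)).congr_deriv (by ring)
  refine (h.sqrt (W_pos hr hx).ne').congr_deriv ?_
  have := (SS_pos hr hx).ne'
  unfold SS at this ⊢
  field_simp

lemma SS_dr {r x : ℝ} (hr : r ∈ Ioo (-1:ℝ) 1) (hx : x ∈ Icc (-1:ℝ) 1) :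
    HasDerivAt (fun r => SS r x) ((r - x) / SS r x) r := by
  have h : HasDerivAt (fun r => 1 - 2 * r * x + r ^ 2) (2 * (r - x)) r :=
    (((((hasDerivAt_id r).const_mul 2).mul_const x).const_sub 1).fun_add (hasDerivAt_pow 2 r)).congr_deriv
      (by push_cast; ring)
  refine (h.sqrt (W_pos hr hx).ne').congr_deriv ?_
  have := (SS_pos hr hx).ne'
  unfold SS at this ⊢
  field_simp

lemma SS_contOn (c : ℝ → ℝ → ℝ) (hc : Continuous (Function.uncurry c)) (n : ℕ) :
    ContinuousOn (Function.uncurry fun r x => c r x / SS r x ^ n) (Ioo (-1) 1 ×ˢ Icc (-1) 1) := by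
  have : (Function.uncurry fun r x => c r x / SS r x ^ n) = fun p : ℝ × ℝ => (Function.uncurry c) p / SS p.1 p.2 ^ n := rfl
  rw [this]
  refine ContinuousOn.div (by fun_prop) (by unfold SS; fun_prop) ?_
  rintro ⟨r, x⟩ ⟨hr, hx⟩
  exact pow_ne_zero n (SS_pos hr hx).ne'

lemma SS_cont {r : ℝ} (hr : r ∈ Ioo (-1:ℝ) 1) (c : ℝ → ℝ) (hc : Continuous c) (n : ℕ) :
    ContinuousOn (fun x => c x / SS r x ^ n) (Icc (-1) 1) := by
  refine ContinuousOn.div (by fun_prop) (by unfold SS; fun_prop) ?_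
  intro x hx
  exact pow_ne_zero n (SS_pos hr hx).ne'

noncomputable def Gf (r x : ℝ) : ℝ := 1 / SS r x ^ 1
noncomputable def Gh (r x : ℝ) : ℝ := -2 * x * r / SS r x ^ 3 + 3 * (1 - x ^ 2) * r ^ 2 / SS r x ^ 5
noncomputable def Gh' (r x : ℝ) : ℝ := -2 * r / SS r x ^ 3 - 12 * x * r ^ 2 / SS r x ^ 5 + 15 * (1 - x ^ 2) * r ^ 3 / SS r x ^ 7

lemma Gf_deriv {r x : ℝ} (hr : r ∈ Ioo (-1:ℝ) 1) (hx : x ∈ Icc (-1:ℝ) 1) :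
    HasDerivAt (Gf r) (r / SS r x ^ 3) x := by
  have h := (SS_pos hr hx).ne'
  unfold Gf
  refine ((hasDerivAt_const x 1).fun_div ((SS_dx hr hx).fun_pow 1) (pow_ne_zero 1 h)).congr_deriv ?_
  push_cast
  field_simp
  ring

lemma Gf2_deriv {r x : ℝ} (hr : r ∈ Ioo (-1:ℝ) 1) (hx : x ∈ Icc (-1:ℝ) 1) :
    HasDerivAt (fun x => (1 - x ^ 2) * (r / SS r x ^ 3)) (Gh r x) x := by
  have h := (SS_pos hr hx).ne'
  have hpd : HasDerivAt (fun x : ℝ => 1 - x ^ 2) (-2 * x) x :=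
    ((hasDerivAt_pow 2 x).const_sub 1).congr_deriv (by push_cast; ring)
  unfold Gh
  refine (hpd.fun_mul ((hasDerivAt_const x r).fun_div ((SS_dx hr hx).fun_pow 3) (pow_ne_zero 3 h))).congr_deriv ?_
  push_cast
  field_simp
  ring

lemma Gh_deriv {r x : ℝ} (hr : r ∈ Ioo (-1:ℝ) 1) (hx : x ∈ Icc (-1:ℝ) 1) :
    HasDerivAt (fun x => Gh r x) (Gh' r x) x := by
  have h := (SS_pos hr hx).ne'
  have hpd : HasDerivAt (fun x : ℝ => 3 * (1 - x ^ 2) * r ^ 2) (-6 * x * r ^ 2) x :=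
    ((((hasDerivAt_pow 2 x).const_sub 1).const_mul 3).mul_const (r ^ 2)).congr_deriv (by push_cast; ring)
  have hqd : HasDerivAt (fun x : ℝ => -2 * x * r) (-2 * r) x :=
    (((hasDerivAt_id x).const_mul (-2)).mul_const r).congr_deriv (by ring)
  unfold Gh Gh'
  refine ((hqd.fun_div ((SS_dx hr hx).fun_pow 3) (pow_ne_zero 3 h)).fun_add
    (hpd.fun_div ((SS_dx hr hx).fun_pow 5) (pow_ne_zero 5 h))).congr_deriv ?_
  push_cast
  field_simp
  ring

noncomputable def NG (r x : ℝ) : ℝ :=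
  -(-2 * x * Gh r x + (1 - x ^ 2) * Gh' r x) + 3 / 4 * ((1 - x ^ 2) * (r / SS r x ^ 3) - x * Gf r x)

lemma Gh_cont {r : ℝ} (hr : r ∈ Ioo (-1:ℝ) 1) : ContinuousOn (Gh r) (Icc (-1) 1) :=
  (SS_cont hr (fun x => -2 * x * r) (by fun_prop) 3).add (SS_cont hr (fun x => 3 * (1 - x ^ 2) * r ^ 2) (by fun_prop) 5)

lemma Gf_cont {r : ℝ} (hr : r ∈ Ioo (-1:ℝ) 1) : ContinuousOn (Gf r) (Icc (-1) 1) :=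
  SS_cont hr (fun x => 1) (by fun_prop) 1

lemma NG_cont {r : ℝ} (hr : r ∈ Ioo (-1:ℝ) 1) : ContinuousOn (NG r) (Icc (-1) 1) := by
  have h1 := Gh_cont hr
  have h2 : ContinuousOn (Gh' r) (Icc (-1) 1) :=
    ((SS_cont hr (fun x => -2 * r) (by fun_prop) 3).sub (SS_cont hr (fun x => 12 * x * r ^ 2) (by fun_prop) 5)).add
    (SS_cont hr (fun x => 15 * (1 - x ^ 2) * r ^ 3) (by fun_prop) 7)
  have h3 := Gf_cont hr
  have h4 := SS_cont hr (fun x => r) (by fun_prop) 3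
  unfold NG
  fun_prop

lemma toL {f : ℝ → ℝ} (h : ContinuousOn f (Icc (-1) 1)) : Tendsto f (𝓝[>] (-1)) (𝓝 (f (-1))) := by
  have := (h (-1) (by norm_num)).tendsto
  refine this.mono_left ?_
  rw [← nhdsWithin_Ioo_eq_nhdsGT (show (-1:ℝ) < 1 by norm_num)]
  exact nhdsWithin_mono _ Ioo_subset_Icc_self

lemma toR {f : ℝ → ℝ} (h : ContinuousOn f (Icc (-1) 1)) : Tendsto f (𝓝[<] 1) (𝓝 (f 1)) := by
  have := (h 1 (by norm_num)).tendsto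
  refine this.mono_left ?_
  rw [← nhdsWithin_Ioo_eq_nhdsLT (show (-1:ℝ) < 1 by norm_num)]
  exact nhdsWithin_mono _ Ioo_subset_Icc_self

lemma intNG {r : ℝ} (hr : r ∈ Ioo (-1:ℝ) 1) : ∫ x in (-1:ℝ)..1, uu x * NG r x = 0 := by
  have c1 := Gf_cont hr
  have c2 := SS_cont hr (fun x => r) (by fun_prop) 3
  have c3 := Gh_cont hr
  have k1 : ContinuousOn (fun x => √(1 - x ^ 2) * Gf r x) (Icc (-1) 1) := by fun_prop
  have k2 : ContinuousOn (fun x => (1 - x ^ 2) * (r / SS r x ^ 3)) (Icc (-1) 1) := by fun_prop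
  have k3 : ContinuousOn (fun x => √(1 - x ^ 2) * Gh r x) (Icc (-1) 1) := by fun_prop
  have q : ∀ x ∈ Ioo (-1:ℝ) 1, √(1 - x ^ 2) * Gh r x = (1 - x ^ 2) * Gh r x / √(1 - x ^ 2) := by
    intro x hx
    have hp0 : 0 < 1 - x ^ 2 := by nlinarith [hx.1, hx.2]
    have hp : 0 < √(1 - x ^ 2) := Real.sqrt_pos.2 hp0
    have hs : √(1 - x ^ 2) ^ 2 = 1 - x ^ 2 := Real.sq_sqrt hp0.le
    nth_rewrite 2 [← hs]
    field_simp
  have L := BB_lim evL uu_limL vv_limL ZZ_limL (toL k1) (toL k2) ((toL k3).congr' (evL.mono q))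
  have R := BB_lim evR uu_limR vv_limR ZZ_limR (toR k1) (toR k2) ((toR k3).congr' (evR.mono q))
  rw [intervalIntegral.integral_eq_sub_of_hasDerivAt_of_tendsto (by norm_num) _ _ L R]
  · norm_num
  · intro x hx
    have hxI := Ioo_subset_Icc_self hx
    have hp0 : 0 < 1 - x ^ 2 := by nlinarith [hx.1, hx.2]
    have hpd : HasDerivAt (fun x : ℝ => 1 - x ^ 2) (-2 * x) x :=
      ((hasDerivAt_pow 2 x).const_sub 1).congr_deriv (by push_cast; ring)
    refine BB_deriv hx ((Gf_deriv hr hxI).congr_deriv ?_) ((Gf2_deriv hr hxI).congr_deriv ?_) (hpd.fun_mul (Gh_deriv hr hxI))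
    · field_simp
    · field_simp
  · refine uu_int.mul_continuousOn ?_
    rw [uIcc_of_le (by norm_num)]
    exact NG_cont hr

noncomputable def gg (r x : ℝ) : ℝ := (1 - r ^ 2) / SS r x ^ 3
noncomputable def gr (r x : ℝ) : ℝ := -2 * r / SS r x ^ 3 - 3 * (1 - r ^ 2) * (r - x) / SS r x ^ 5
noncomputable def grr (r x : ℝ) : ℝ := -2 / SS r x ^ 3 + (6 * r * (r - x) - 3 * (-2 * r * (r - x) + (1 - r ^ 2))) / SS r x ^ 5
  + 15 * (1 - r ^ 2) * (r - x) ^ 2 / SS r x ^ 7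

lemma gg_deriv {r x : ℝ} (hr : r ∈ Ioo (-1:ℝ) 1) (hx : x ∈ Icc (-1:ℝ) 1) :
    HasDerivAt (fun r => gg r x) (gr r x) r := by
  have h := (SS_pos hr hx).ne'
  have hpd : HasDerivAt (fun x : ℝ => 1 - x ^ 2) (-2 * r) r :=
    ((hasDerivAt_pow 2 r).const_sub 1).congr_deriv (by push_cast; ring)
  unfold gg gr
  refine (hpd.fun_div ((SS_dr hr hx).fun_pow 3) (pow_ne_zero 3 h)).congr_deriv ?_
  push_cast
  field_simp

lemma gr_deriv {r x : ℝ} (hr : r ∈ Ioo (-1:ℝ) 1) (hx : x ∈ Icc (-1:ℝ) 1) :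
    HasDerivAt (fun r => gr r x) (grr r x) r := by
  have h := (SS_pos hr hx).ne'
  have h1 : HasDerivAt (fun r : ℝ => -2 * r) (-2) r :=
    ((hasDerivAt_id r).const_mul (-2)).congr_deriv (by ring)
  have h2 : HasDerivAt (fun r : ℝ => 3 * (1 - r ^ 2) * (r - x)) (3 * (-2 * r * (r - x) + (1 - r ^ 2))) r :=
    ((((hasDerivAt_pow 2 r).const_sub 1).const_mul 3).fun_mul ((hasDerivAt_id r).sub_const x)).congr_deriv
      (by push_cast; simp only [id]; ring)
  unfold gr grr
  refine ((h1.fun_div ((SS_dr hr hx).fun_pow 3) (pow_ne_zero 3 h)).fun_sub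
    (h2.fun_div ((SS_dr hr hx).fun_pow 5) (pow_ne_zero 5 h))).congr_deriv ?_
  push_cast
  field_simp
  ring

lemma gg_NG {r x : ℝ} (hr : r ∈ Ioo (-1:ℝ) 1) (hx : x ∈ Icc (-1:ℝ) 1) :
    (1 - 3 * r ^ 2) * gr r x + (r - r ^ 3) * grr r x = r * gg r x - 4 * NG r x := by
  have h := (SS_pos hr hx).ne'
  have hs := SS_sq hr hx
  have h4 : SS r x ^ 4 = (1 - 2 * r * x + r ^ 2) ^ 2 := by rw [← hs]; ring
  have h6 : SS r x ^ 6 = (1 - 2 * r * x + r ^ 2) ^ 3 := by rw [← hs]; ring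
  unfold gg gr grr NG Gh Gh' Gf
  field_simp
  simp only [hs, h4, h6]
  ring

lemma gr_contOn : ContinuousOn (Function.uncurry gr) (Ioo (-1) 1 ×ˢ Icc (-1) 1) :=
  (SS_contOn (fun r x => -2 * r) (by unfold Function.uncurry; fun_prop) 3).sub
    (SS_contOn (fun r x => 3 * (1 - r ^ 2) * (r - x)) (by unfold Function.uncurry; fun_prop) 5)

lemma grr_contOn : ContinuousOn (Function.uncurry grr) (Ioo (-1) 1 ×ˢ Icc (-1) 1) :=
  ((SS_contOn (fun r x => -2) (by unfold Function.uncurry; fun_prop) 3).add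
    (SS_contOn (fun r x => 6 * r * (r - x) - 3 * (-2 * r * (r - x) + (1 - r ^ 2))) (by unfold Function.uncurry; fun_prop) 5)).add
    (SS_contOn (fun r x => 15 * (1 - r ^ 2) * (r - x) ^ 2) (by unfold Function.uncurry; fun_prop) 7)

lemma slice {F : ℝ → ℝ → ℝ} {s t : Set ℝ} (h : ContinuousOn (Function.uncurry F) (s ×ˢ t)) {r : ℝ} (hr : r ∈ s) :
    ContinuousOn (F r) t := by
  have : F r = Function.uncurry F ∘ fun x => (r, x) := rfl
  rw [this]
  exact h.comp (by fun_prop) (fun x hx => ⟨hr, hx⟩)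

noncomputable def HH (r : ℝ) : ℝ := ∫ x in (-1:ℝ)..1, uu x * gg r x
noncomputable def Hr (r : ℝ) : ℝ := ∫ x in (-1:ℝ)..1, uu x * gr r x

lemma gg_cont {r : ℝ} (hr : r ∈ Ioo (-1:ℝ) 1) : ContinuousOn (gg r) (Icc (-1) 1) :=
  SS_cont hr (fun _ => 1 - r ^ 2) (by fun_prop) 3

lemma HH_deriv {r : ℝ} (hr : r ∈ Ioo (-1:ℝ) 1) : HasDerivAt HH (Hr r) r := by
  unfold HH Hr
  exact paramDeriv (by norm_num) (isOpen_Ioo.mem_nhds hr) uu_int (fun r hr => gg_cont hr) gr_contOn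
    (fun r hr x hx => gg_deriv hr hx)

lemma uu_mul_int {f : ℝ → ℝ} (hf : ContinuousOn f (Icc (-1) 1)) : IntervalIntegrable (fun x => uu x * f x) volume (-1) 1 := by
  refine uu_int.mul_continuousOn ?_
  rw [uIcc_of_le (by norm_num)]
  exact hf

lemma Hq_deriv {r : ℝ} (hr : r ∈ Ioo (-1:ℝ) 1) : HasDerivAt (fun r => (r - r ^ 3) * Hr r) (r * HH r) r := by
  have h1 : HasDerivAt Hr (∫ x in (-1:ℝ)..1, uu x * grr r x) r := by
    unfold Hr
    exact paramDeriv (by norm_num) (isOpen_Ioo.mem_nhds hr) uu_int (fun r hr => slice gr_contOn hr) grr_contOn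
      (fun r hr x hx => gr_deriv hr hx)
  have h2 : HasDerivAt (fun r : ℝ => r - r ^ 3) (1 - 3 * r ^ 2) r :=
    ((hasDerivAt_id r).fun_sub (hasDerivAt_pow 3 r)).congr_deriv (by push_cast; ring)
  refine (h2.fun_mul h1).congr_deriv ?_
  have i1 := uu_mul_int (slice gr_contOn hr)
  have i2 := uu_mul_int (slice grr_contOn hr)
  have i3 := uu_mul_int (gg_cont hr)
  have i4 := uu_mul_int (NG_cont hr)
  unfold Hr HH
  rw [← intervalIntegral.integral_const_mul, ← intervalIntegral.integral_const_mul, ← intervalIntegral.integral_const_mul,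
    ← intervalIntegral.integral_add (i1.const_mul _) (i2.const_mul _)]
  have e : ∫ x in (-1:ℝ)..1, r * (uu x * gg r x) = ∫ x in (-1:ℝ)..1, (r * (uu x * gg r x) - 4 * (uu x * NG r x)) := by
    rw [intervalIntegral.integral_sub (i3.const_mul _) (i4.const_mul _), intervalIntegral.integral_const_mul 4, intNG hr]
    ring
  rw [e]
  apply intervalIntegral.integral_congr
  intro x hx
  rw [uIcc_of_le (by norm_num)] at hx
  have := gg_NG hr hx
  linear_combination uu x * this

noncomputable def Dk (k θ : ℝ) : ℝ := √(1 - k ^ 2 * Real.sin θ ^ 2)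

lemma sq_lt {k : ℝ} (hk : k ∈ Ioo (-1:ℝ) 1) : k ^ 2 < 1 := by nlinarith [hk.1, hk.2]
lemma Dk_pos {k : ℝ} (hk : k ∈ Ioo (-1:ℝ) 1) (θ : ℝ) : 0 < Dk k θ := Real.sqrt_pos.2 (oneK_pos (sq_lt hk) θ)
lemma Dk_sq {k : ℝ} (hk : k ∈ Ioo (-1:ℝ) 1) (θ : ℝ) : Dk k θ ^ 2 = 1 - k ^ 2 * Real.sin θ ^ 2 :=
  Real.sq_sqrt (oneK_pos (sq_lt hk) θ).le

lemma Dk_dk {k : ℝ} (hk : k ∈ Ioo (-1:ℝ) 1) (θ : ℝ) : HasDerivAt (fun k => Dk k θ) (-(k * Real.sin θ ^ 2) / Dk k θ) k := by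
  have h : HasDerivAt (fun k : ℝ => 1 - k ^ 2 * Real.sin θ ^ 2) (-(2 * k * Real.sin θ ^ 2)) k :=
    (((hasDerivAt_pow 2 k).mul_const (Real.sin θ ^ 2)).const_sub 1).congr_deriv (by push_cast; ring)
  refine (h.sqrt (oneK_pos (sq_lt hk) θ).ne').congr_deriv ?_
  have := (Dk_pos hk θ).ne'
  unfold Dk at this ⊢
  field_simp

lemma Dk_dt {k : ℝ} (hk : k ∈ Ioo (-1:ℝ) 1) (θ : ℝ) :
    HasDerivAt (fun θ => Dk k θ) (-(k ^ 2 * Real.sin θ * Real.cos θ) / Dk k θ) θ := by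
  have h : HasDerivAt (fun θ : ℝ => 1 - k ^ 2 * Real.sin θ ^ 2) (-(2 * k ^ 2 * Real.sin θ * Real.cos θ)) θ :=
    ((((Real.hasDerivAt_sin θ).fun_pow 2).const_mul (k ^ 2)).const_sub 1).congr_deriv (by push_cast; ring)
  refine (h.sqrt (oneK_pos (sq_lt hk) θ).ne').congr_deriv ?_
  have := (Dk_pos hk θ).ne'
  unfold Dk at this ⊢
  field_simp

lemma Dk_contOn (c : ℝ → ℝ → ℝ) (hc : Continuous (Function.uncurry c)) (n : ℕ) :
    ContinuousOn (Function.uncurry fun r x => c r x / Dk r x ^ n) (Ioo (-1) 1 ×ˢ Icc 0 (π / 2)) := by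
  have : (Function.uncurry fun r x => c r x / Dk r x ^ n) = fun p : ℝ × ℝ => (Function.uncurry c) p / Dk p.1 p.2 ^ n := rfl
  rw [this]
  refine ContinuousOn.div (by fun_prop) (by unfold Dk; fun_prop) ?_
  rintro ⟨r, x⟩ ⟨hr, _⟩
  exact pow_ne_zero n (Dk_pos hr x).ne'

noncomputable def Kr (k : ℝ) : ℝ := ∫ θ in (0:ℝ)..(π/2), k * Real.sin θ ^ 2 / Dk k θ ^ 3

lemma pi2 : (0:ℝ) ≤ π / 2 := by positivity

lemma K_contOn : ContinuousOn (Function.uncurry fun k θ => 1 / √(1 - k ^ 2 * Real.sin θ ^ 2)) (Ioo (-1) 1 ×ˢ Icc 0 (π / 2)) := by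
  have := Dk_contOn (fun _ _ => 1) (by unfold Function.uncurry; fun_prop) 1
  simp only [pow_one] at this
  exact this

lemma Kr_contOn : ContinuousOn (Function.uncurry fun k θ => k * Real.sin θ ^ 2 / Dk k θ ^ 3) (Ioo (-1) 1 ×ˢ Icc 0 (π / 2)) :=
  Dk_contOn (fun k θ => k * Real.sin θ ^ 2) (by unfold Function.uncurry; fun_prop) 3

lemma Krr_contOn : ContinuousOn (Function.uncurry fun k θ => Real.sin θ ^ 2 / Dk k θ ^ 3 + 3 * k ^ 2 * Real.sin θ ^ 4 / Dk k θ ^ 5)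
    (Ioo (-1) 1 ×ˢ Icc 0 (π / 2)) :=
  (Dk_contOn (fun k θ => Real.sin θ ^ 2) (by unfold Function.uncurry; fun_prop) 3).add
  (Dk_contOn (fun k θ => 3 * k ^ 2 * Real.sin θ ^ 4) (by unfold Function.uncurry; fun_prop) 5)

lemma K_deriv {k : ℝ} (hk : k ∈ Ioo (-1:ℝ) 1) : HasDerivAt ellipticK (Kr k) k := by
  unfold ellipticK Kr
  refine paramDeriv1 (F' := fun k θ => k * Real.sin θ ^ 2 / Dk k θ ^ 3) pi2 (isOpen_Ioo.mem_nhds hk)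
    (fun k hk => slice (F := fun k θ => 1 / √(1 - k ^ 2 * Real.sin θ ^ 2)) K_contOn hk) Kr_contOn ?_
  intro k hk θ _
  have h := (Dk_pos hk θ).ne'
  refine ((hasDerivAt_const k (1:ℝ)).fun_div (Dk_dk hk θ) h).congr_deriv ?_
  field_simp
  ring

lemma Kq_deriv {k : ℝ} (hk : k ∈ Ioo (-1:ℝ) 1) : HasDerivAt (fun k => (k - k ^ 3) * Kr k) (k * ellipticK k) k := by
  have h1 : HasDerivAt Kr (∫ θ in (0:ℝ)..(π/2), (Real.sin θ ^ 2 / Dk k θ ^ 3 + 3 * k ^ 2 * Real.sin θ ^ 4 / Dk k θ ^ 5)) k := by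
    unfold Kr
    refine paramDeriv1 (F' := fun k θ => Real.sin θ ^ 2 / Dk k θ ^ 3 + 3 * k ^ 2 * Real.sin θ ^ 4 / Dk k θ ^ 5) pi2 (isOpen_Ioo.mem_nhds hk)
      (fun k hk => slice (F := fun k θ => k * Real.sin θ ^ 2 / Dk k θ ^ 3) Kr_contOn hk) Krr_contOn ?_
    intro k hk θ _
    have h := (Dk_pos hk θ).ne'
    refine (((hasDerivAt_id k).mul_const (Real.sin θ ^ 2)).fun_div ((Dk_dk hk θ).fun_pow 3) (pow_ne_zero 3 h)).congr_deriv ?_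
    push_cast
    simp only [id]
    field_simp
    ring
  have h2 : HasDerivAt (fun r : ℝ => r - r ^ 3) (1 - 3 * k ^ 2) k :=
    ((hasDerivAt_id k).fun_sub (hasDerivAt_pow 3 k)).congr_deriv (by push_cast; ring)
  refine (h2.fun_mul h1).congr_deriv ?_
  have ii : ∀ f : ℝ → ℝ, ContinuousOn f (Icc 0 (π/2)) → IntervalIntegrable f volume 0 (π/2) := by
    intro f hf
    apply ContinuousOn.intervalIntegrable
    rwa [uIcc_of_le pi2]
  have i0 := ii _ (slice (F := fun k θ => 1 / √(1 - k ^ 2 * Real.sin θ ^ 2)) K_contOn hk)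
  have i1 := ii _ (slice (F := fun k θ => k * Real.sin θ ^ 2 / Dk k θ ^ 3) Kr_contOn hk)
  have i2 := ii _ (slice (F := fun k θ => Real.sin θ ^ 2 / Dk k θ ^ 3 + 3 * k ^ 2 * Real.sin θ ^ 4 / Dk k θ ^ 5) Krr_contOn hk)
  have key : ∫ θ in (0:ℝ)..(π/2), ((1 - 3 * k ^ 2) * (k * Real.sin θ ^ 2 / Dk k θ ^ 3) +
      (k - k ^ 3) * (Real.sin θ ^ 2 / Dk k θ ^ 3 + 3 * k ^ 2 * Real.sin θ ^ 4 / Dk k θ ^ 5) -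
      k * (1 / √(1 - k ^ 2 * Real.sin θ ^ 2))) = 0 := by
    rw [intervalIntegral.integral_eq_sub_of_hasDerivAt
      (f := fun θ => -(k * (Real.sin θ * Real.cos θ) / Dk k θ ^ 3)) _ (((i1.const_mul _).add (i2.const_mul _)).sub (i0.const_mul _))]
    · simp
    · intro θ _
      have h := (Dk_pos hk θ).ne'
      have hs := Dk_sq hk θ
      refine ((((Real.hasDerivAt_sin θ).fun_mul (Real.hasDerivAt_cos θ)).const_mul k).fun_div
        ((Dk_dt hk θ).fun_pow 3) (pow_ne_zero 3 h)).fun_neg.congr_deriv ?_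
      have e : √(1 - k ^ 2 * Real.sin θ ^ 2) = Dk k θ := rfl
      rw [e]
      have h4 : Dk k θ ^ 4 = (1 - k ^ 2 * Real.sin θ ^ 2) ^ 2 := by rw [← hs]; ring
      have hc : Real.cos θ ^ 2 = 1 - Real.sin θ ^ 2 := by linarith [Real.sin_sq_add_cos_sq θ]
      push_cast
      field_simp
      simp only [hs, h4, hc]
      ring
  rw [intervalIntegral.integral_sub ((i1.const_mul _).add (i2.const_mul _)) (i0.const_mul _),
    intervalIntegral.integral_add (i1.const_mul _) (i2.const_mul _)] at key
  simp only [intervalIntegral.integral_const_mul] at key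
  unfold Kr ellipticK
  linarith

lemma K_pos {k : ℝ} (hk : k ∈ Ioo (-1:ℝ) 1) : 0 < ellipticK k := by
  unfold ellipticK
  apply intervalIntegral.intervalIntegral_pos_of_pos
  · apply ContinuousOn.intervalIntegrable
    rw [uIcc_of_le pi2]
    exact slice (F := fun k θ => 1 / √(1 - k ^ 2 * Real.sin θ ^ 2)) K_contOn hk
  · intro θ
    exact one_div_pos.2 (Dk_pos hk θ)
  · positivity

lemma HH_K : ∃ A : ℝ, ∀ r ∈ Ioo (0:ℝ) 1, HH r = A * ellipticK r := by
  have W0 : ∀ r ∈ Ioo (-1:ℝ) 1, HH r * ((r - r ^ 3) * Kr r) - (r - r ^ 3) * Hr r * ellipticK r = 0 := by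
    intro r hr
    have hd : ∀ r ∈ Ioo (-1:ℝ) 1, HasDerivAt
        (fun r => HH r * ((r - r ^ 3) * Kr r) - (r - r ^ 3) * Hr r * ellipticK r) 0 r := by
      intro r hr
      exact (((HH_deriv hr).fun_mul (Kq_deriv hr)).fun_sub ((Hq_deriv hr).fun_mul (K_deriv hr))).congr_deriv (by ring)
    have := isOpen_Ioo.is_const_of_deriv_eq_zero isPreconnected_Ioo
      (fun r hr => (hd r hr).differentiableAt.differentiableWithinAt) (fun r hr => (hd r hr).deriv) hr
      (show (0:ℝ) ∈ Ioo (-1:ℝ) 1 by norm_num)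
    rw [this]; ring
  have hsub : Ioo (0:ℝ) 1 ⊆ Ioo (-1) 1 := Ioo_subset_Ioo_left (by norm_num)
  have hd : ∀ r ∈ Ioo (0:ℝ) 1, HasDerivAt (fun r => HH r / ellipticK r) 0 r := by
    intro r hr
    have hk := (K_pos (hsub hr)).ne'
    refine ((HH_deriv (hsub hr)).fun_div (K_deriv (hsub hr)) hk).congr_deriv ?_
    have hq : r - r ^ 3 ≠ 0 := by
      have : 0 < r * (1 - r ^ 2) := mul_pos hr.1 (by nlinarith [hr.1, hr.2])
      nlinarith
    have h0 := W0 r (hsub hr)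
    have : Hr r * ellipticK r - HH r * Kr r = 0 := by
      apply mul_left_cancel₀ hq
      linear_combination -h0
    rw [this, zero_div]
  refine ⟨HH (1/2) / ellipticK (1/2), fun r hr => ?_⟩
  have := isOpen_Ioo.is_const_of_deriv_eq_zero isPreconnected_Ioo
      (fun r hr => (hd r hr).differentiableAt.differentiableWithinAt) (fun r hr => (hd r hr).deriv) hr
      (show (1/2:ℝ) ∈ Ioo (0:ℝ) 1 by norm_num)
  rw [← this]
  have hk := (K_pos (hsub hr)).ne'
  field_simp

lemma yf_meas : Measurable yf := by
  have : yf = fun x => ∫ σ in Ioc (0:ℝ) 1, 4 * (1 + σ ^ 2) / √(yS x σ) := by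
    ext x; unfold yf; rw [intervalIntegral.integral_of_le zero_le_one]
  rw [this]
  refine (StronglyMeasurable.integral_prod_right (f := fun x σ => 4 * (1 + σ ^ 2) / √(yS x σ)) ?_).measurable
  apply Measurable.stronglyMeasurable
  unfold Function.uncurry yS
  fun_prop

lemma K_meas : Measurable ellipticK := by
  have : ellipticK = fun k => ∫ θ in Ioc (0:ℝ) (π/2), 1 / √(1 - k ^ 2 * Real.sin θ ^ 2) := by
    ext x; unfold ellipticK; rw [intervalIntegral.integral_of_le pi2]
  rw [this]
  refine (StronglyMeasurable.integral_prod_right (f := fun k θ => 1 / √(1 - k ^ 2 * Real.sin θ ^ 2)) ?_).measurable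
  apply Measurable.stronglyMeasurable
  unfold Function.uncurry
  fun_prop

lemma uu_meas : Measurable uu := by
  unfold uu
  exact yf_meas.mul (yf_meas.comp measurable_neg)

lemma gg_meas : Measurable (Function.uncurry gg) := by
  unfold Function.uncurry gg SS
  fun_prop

lemma rK_inner {θ : ℝ} (h : θ ∈ Ioo 0 (π/2)) :
    ∫⁻ r in Ioo (0:ℝ) 1, E (r / √(1 - r ^ 2 * Real.sin θ ^ 2)) = E (1 / (1 + Real.cos θ)) := by
  have hs : 0 < Real.sin θ := Real.sin_pos_of_pos_of_lt_pi h.1 (by linarith [h.2, Real.pi_pos])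
  have hc : 0 < Real.cos θ := Real.cos_pos_of_mem_Ioo ⟨by linarith [h.1, Real.pi_pos], h.2⟩
  have hsc := Real.sin_sq_add_cos_sq θ
  have hp : ∀ r ∈ Icc (0:ℝ) 1, 0 < 1 - r ^ 2 * Real.sin θ ^ 2 := by
    intro r hr
    have : r ^ 2 ≤ 1 := by nlinarith [hr.1, hr.2]
    nlinarith [mul_le_mul_of_nonneg_right this (sq_nonneg (Real.sin θ)), mul_pos hc hc]
  have hcont : ContinuousOn (fun r => r / √(1 - r ^ 2 * Real.sin θ ^ 2)) (Icc 0 1) := by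
    refine ContinuousOn.div (by fun_prop) (by fun_prop) fun r hr => (Real.sqrt_pos.2 (hp r hr)).ne'
  rw [← ofReal_integral_cont zero_le_one hcont (fun r hr => div_nonneg hr.1 (Real.sqrt_nonneg _))]
  congr 1
  rw [intervalIntegral.integral_eq_sub_of_hasDerivAt (f := fun r => -(√(1 - r ^ 2 * Real.sin θ ^ 2) / Real.sin θ ^ 2))]
  · have : 1 - (1:ℝ) ^ 2 * Real.sin θ ^ 2 = Real.cos θ ^ 2 := by linarith
    rw [this, Real.sqrt_sq hc.le]
    have e : Real.sin θ ^ 2 = (1 - Real.cos θ) * (1 + Real.cos θ) := by linarith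
    have e1 : 1 - Real.cos θ ≠ 0 := by
      intro h0; rw [h0, zero_mul] at e; exact (pow_pos hs 2).ne' e
    norm_num
    rw [e]
    field_simp
    ring
  · intro r hr
    rw [uIcc_of_le zero_le_one] at hr
    have hd : HasDerivAt (fun r : ℝ => 1 - r ^ 2 * Real.sin θ ^ 2) (-(2 * r * Real.sin θ ^ 2)) r :=
      (((hasDerivAt_pow 2 r).mul_const (Real.sin θ ^ 2)).const_sub 1).congr_deriv (by push_cast; ring)
    refine ((hd.sqrt (hp r hr).ne').div_const _).fun_neg.congr_deriv ?_
    have := (Real.sqrt_pos.2 (hp r hr)).ne'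
    field_simp
  · apply ContinuousOn.intervalIntegrable
    rwa [uIcc_of_le zero_le_one]

lemma rK_lint : ∫⁻ r in Ioo (0:ℝ) 1, E (r * ellipticK r) = 1 := by
  have e1 : ∫⁻ r in Ioo (0:ℝ) 1, E (r * ellipticK r) =
      ∫⁻ r in Ioo (0:ℝ) 1, ∫⁻ θ in Ioo 0 (π/2), E (r / √(1 - r ^ 2 * Real.sin θ ^ 2)) := by
    refine setLIntegral_congr_fun measurableSet_Ioo fun r hr => ?_
    have hr2 : r ^ 2 < 1 := by nlinarith [hr.1, hr.2]
    rw [ENNReal.ofReal_mul hr.1.le, K_lint hr2, ← lintegral_const_mul']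
    · refine lintegral_congr fun θ => ?_
      rw [← ENNReal.ofReal_mul hr.1.le, mul_one_div]
    · exact ENNReal.ofReal_ne_top
  rw [e1, lint_swap (fun r θ => E (r / √(1 - r ^ 2 * Real.sin θ ^ 2))) (by unfold Function.uncurry; fun_prop)]
  rw [setLIntegral_congr_fun measurableSet_Ioo (fun θ hθ => rK_inner hθ)]
  have hp : ∀ θ ∈ Icc 0 (π/2), 0 < 1 + Real.cos θ := by
    intro θ hθ
    have := Real.cos_nonneg_of_mem_Icc (show θ ∈ Icc (-(π/2)) (π/2) from ⟨by linarith [hθ.1, Real.pi_pos], hθ.2⟩)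
    linarith
  have hcont : ContinuousOn (fun θ => 1 / (1 + Real.cos θ)) (Icc 0 (π/2)) :=
    ContinuousOn.div (by fun_prop) (by fun_prop) fun θ hθ => (hp θ hθ).ne'
  rw [← ofReal_integral_cont pi2 hcont (fun θ hθ => (one_div_pos.2 (hp θ hθ)).le)]
  rw [intervalIntegral.integral_eq_sub_of_hasDerivAt (f := fun θ => Real.sin θ / (1 + Real.cos θ))]
  · simp
  · intro θ hθ
    rw [uIcc_of_le pi2] at hθ
    refine ((Real.hasDerivAt_sin θ).fun_div ((Real.hasDerivAt_cos θ).const_add 1) (hp θ hθ).ne').congr_deriv ?_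
    have := (hp θ hθ).ne'
    have h2 := Real.sin_sq_add_cos_sq θ
    field_simp
    linarith
  · apply ContinuousOn.intervalIntegrable
    rwa [uIcc_of_le pi2]

noncomputable def fL (x : ℝ) : ℝ := Real.log (√2 + √(1 - x)) - Real.log (√(1 - x))
noncomputable def psi (x : ℝ) : ℝ := (-4 + 6 * x) / (√2 * √(1 - x)) + 3 - 3 * x * fL x

lemma psi_inner {x : ℝ} (hx : x ∈ Ioo (-1:ℝ) 1) :
    ∫⁻ r in Ioo (0:ℝ) 1, E (r * gg r x) = E (psi x) ∧ 0 ≤ psi x := by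
  have hW : ∀ r : ℝ, 0 < 1 - 2 * r * x + r ^ 2 := by
    intro r
    nlinarith [sq_nonneg (r - x), hx.1, hx.2]
  have hS : ∀ r, 0 < SS r x := fun r => Real.sqrt_pos.2 (hW r)
  have hS2 : ∀ r, SS r x ^ 2 = 1 - 2 * r * x + r ^ 2 := fun r => Real.sq_sqrt (hW r).le
  have hSx : ∀ r, 0 < SS r x + r - x := by
    intro r
    have h1 : x - r < SS r x := by
      apply Real.lt_sqrt_of_sq_lt
      nlinarith [hx.1, hx.2]
    linarith
  have hcont : ContinuousOn (fun r => r * gg r x) (Icc 0 1) := by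
    unfold gg
    refine ContinuousOn.mul (by fun_prop) (ContinuousOn.div (by fun_prop) (by unfold SS; fun_prop) fun r _ => (pow_pos (hS r) 3).ne')
  have hnn : ∀ r ∈ Icc (0:ℝ) 1, 0 ≤ r * gg r x := by
    intro r hr
    unfold gg
    exact mul_nonneg hr.1 (div_nonneg (by nlinarith [hr.1, hr.2]) (pow_pos (hS r) 3).le)
  have hI : ∫ r in (0:ℝ)..1, r * gg r x = psi x := by
    rw [intervalIntegral.integral_eq_sub_of_hasDerivAt
      (f := fun r => (-r ^ 2 + 6 * x * r - 3) / SS r x - 3 * x * Real.log (SS r x + r - x))]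
    · have hs : 0 < √(1 - x) := Real.sqrt_pos.2 (by linarith [hx.2])
      have hss : √(1 - x) ^ 2 = 1 - x := Real.sq_sqrt (by linarith [hx.2])
      have e1 : SS 1 x = √2 * √(1 - x) := by
        unfold SS
        rw [← Real.sqrt_mul (by norm_num)]; congr 1; ring
      have e0 : SS 0 x = 1 := by unfold SS; norm_num
      have e2 : SS 1 x + 1 - x = √(1 - x) * (√2 + √(1 - x)) := by
        rw [e1]; linear_combination -hss
      have e3 : SS 0 x + 0 - x = √(1 - x) * √(1 - x) := by
        rw [e0]; linear_combination -hss
      rw [e2, e3, Real.log_mul hs.ne' (by positivity), Real.log_mul hs.ne' hs.ne', e1, e0]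
      unfold psi fL
      ring
    · intro r _
      have h := (hS r).ne'
      have hd : HasDerivAt (fun r => SS r x) ((r - x) / SS r x) r := by
        have h : HasDerivAt (fun r => 1 - 2 * r * x + r ^ 2) (2 * (r - x)) r :=
          (((((hasDerivAt_id r).const_mul 2).mul_const x).const_sub 1).fun_add (hasDerivAt_pow 2 r)).congr_deriv
            (by push_cast; ring)
        refine (h.sqrt (hW r).ne').congr_deriv ?_
        have := (hS r).ne'
        unfold SS at this ⊢
        field_simp
      have h1 : HasDerivAt (fun r : ℝ => -r ^ 2 + 6 * x * r - 3) (-2 * r + 6 * x) r :=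
        ((((hasDerivAt_pow 2 r).fun_neg).fun_add ((hasDerivAt_id r).const_mul (6 * x))).sub_const 3).congr_deriv
          (by push_cast; ring)
      have h2 : HasDerivAt (fun r => Real.log (SS r x + r - x)) (1 / SS r x) r := by
        refine (((hd.fun_add (hasDerivAt_id r)).sub_const x).log (hSx r).ne').congr_deriv ?_
        have := (hSx r).ne'
        simp only [id]
        rw [div_eq_div_iff this h]
        field_simp
        ring
      refine ((h1.fun_div hd h).fun_sub (h2.const_mul (3 * x))).congr_deriv ?_
      unfold gg
      have hs := hS2 r
      field_simp
      simp only [hs]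
      ring
    · apply ContinuousOn.intervalIntegrable
      rwa [uIcc_of_le zero_le_one]
  constructor
  · rw [← ofReal_integral_cont zero_le_one hcont hnn, hI]
  · rw [← hI]
    exact intervalIntegral.integral_nonneg zero_le_one hnn

lemma HH_lint {r : ℝ} (hr : r ∈ Ioo (-1:ℝ) 1) : E (HH r) = ∫⁻ x in Ioo (-1:ℝ) 1, E (uu x * gg r x) ∧ 0 ≤ HH r := by
  have hnn : ∀ x ∈ Icc (-1:ℝ) 1, 0 ≤ uu x * gg r x := by
    intro x hx
    unfold gg
    exact mul_nonneg (uu_nonneg x) (div_nonneg (by linarith [sq_lt hr]) (pow_pos (SS_pos hr hx) 3).le)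
  have hi := uu_mul_int (gg_cont hr)
  rw [intervalIntegrable_iff_integrableOn_Ioo_of_le (by norm_num)] at hi
  constructor
  · unfold HH
    rw [intervalIntegral.integral_of_le (by norm_num), integral_Ioc_eq_integral_Ioo, ofReal_integral_eq_lintegral_ofReal hi]
    refine (ae_restrict_iff' measurableSet_Ioo).2 (Eventually.of_forall fun x hx => ?_)
    exact hnn x (Ioo_subset_Icc_self hx)
  · unfold HH
    exact intervalIntegral.integral_nonneg (by norm_num) hnn

lemma upsi : ∫⁻ x in Ioo (-1:ℝ) 1, E (uu x * psi x) = E (8 * √2 * π) := by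
  set f2 : ℝ → ℝ := fun x => 1 - √(1 - x) / √2 with hf2
  set f3 : ℝ → ℝ := fun x => √(1 - x) * (1 + x) / (2 * √2) with hf3
  have h2s : √2 ^ 2 = (2:ℝ) := Real.sq_sqrt (by norm_num)
  have h20 : 0 < √2 := by positivity
  have hd : ∀ x ∈ Ioo (-1:ℝ) 1, HasDerivAt (fun x => 4 * BB fL f2 f3 x) (uu x * psi x) x := by
    intro x hx
    have h1x : 0 < 1 - x := by linarith [hx.2]
    have hs : 0 < √(1 - x) := Real.sqrt_pos.2 h1x
    have hss : √(1 - x) ^ 2 = 1 - x := Real.sq_sqrt h1x.le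
    have hp0 : 0 < 1 - x ^ 2 := by nlinarith [hx.1, hx.2]
    have ds : HasDerivAt (fun x : ℝ => √(1 - x)) (-1 / (2 * √(1 - x))) x :=
      ((hasDerivAt_id x).const_sub 1).sqrt h1x.ne'
    have hpe : 1 - x ^ 2 = √(1 - x) ^ 2 * (2 - √(1 - x) ^ 2) := by rw [hss]; ring
    have hpe2 : 2 - √(1 - x) ^ 2 = (√2 - √(1 - x)) * (√2 + √(1 - x)) := by linear_combination -h2s
    have d1 : HasDerivAt fL (f2 x / (1 - x ^ 2)) x := by
      unfold fL
      refine ((ds.const_add (√2)).log (by positivity)|>.fun_sub (ds.log hs.ne')).congr_deriv ?_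
      rw [eq_div_iff hp0.ne', hpe, hpe2, hf2]
      field_simp
      have h3 : √2 ^ 3 = 2 * √2 := by rw [show √2 ^ 3 = √2 ^ 2 * √2 by ring, h2s]
      ring_nf
      simp only [h2s, h3]
      ring
    have d2 : HasDerivAt f2 (f3 x / (1 - x ^ 2)) x := by
      refine ((ds.div_const (√2)).const_sub 1).congr_deriv ?_
      rw [eq_div_iff hp0.ne', hf3]
      rw [show 1 - x ^ 2 = √(1 - x) ^ 2 * (1 + x) by rw [hss]; ring]
      field_simp
    have d3 : HasDerivAt f3 ((-1 / (2 * √(1 - x)) * (1 + x) + √(1 - x)) / (2 * √2)) x := by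
      refine ((ds.fun_mul ((hasDerivAt_id x).const_add 1)).div_const (2 * √2)).congr_deriv ?_
      simp only [id]; ring
    refine ((BB_deriv hx d1 d2 d3).const_mul 4).congr_deriv ?_
    unfold psi
    rw [hf2]
    have hxe : x = 1 - √(1 - x) ^ 2 := by rw [hss]; ring
    generalize fL x = L
    have : -((-1 / (2 * √(1 - x)) * (1 + x) + √(1 - x)) / (2 * √2)) + 3 / 4 * (1 - √(1 - x) / √2 - x * L)
       = ((-4 + 6 * x) / (√2 * √(1 - x)) + 3 - 3 * x * L) / 4 := by
      field_simp
      ring_nf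
      rw [hss]
      ring
    rw [this]; ring
  have cf : Continuous (fun x : ℝ => √(1 + x) * (√(1 - x) * Real.log (√2 + √(1 - x)) - √(1 - x) * Real.log (√(1 - x)))) := by
    have c1 : Continuous (fun x : ℝ => √(1 - x) * Real.log (√(1 - x))) :=
      Real.continuous_mul_log.comp (by fun_prop : Continuous fun x : ℝ => √(1 - x))
    have c2 : Continuous (fun x : ℝ => Real.log (√2 + √(1 - x))) :=
      Continuous.log (by fun_prop) (fun x => by positivity)
    fun_prop
  have c3 : Continuous (fun x : ℝ => √(1 + x) / (2 * √2)) := by fun_prop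
  have c2 : Continuous f2 := by rw [hf2]; fun_prop
  have qf : ∀ x ∈ Ioo (-1:ℝ) 1, √(1 + x) * (√(1 - x) * Real.log (√2 + √(1 - x)) - √(1 - x) * Real.log (√(1 - x)))
      = √(1 - x ^ 2) * fL x := by
    intro x hx
    rw [show 1 - x ^ 2 = (1 + x) * (1 - x) by ring, Real.sqrt_mul (by linarith [hx.1])]
    unfold fL; ring
  have q3 : ∀ x ∈ Ioo (-1:ℝ) 1, √(1 + x) / (2 * √2) = f3 x / √(1 - x ^ 2) := by
    intro x hx
    have hs : 0 < √(1 - x) := Real.sqrt_pos.2 (by linarith [hx.2])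
    have hs1 : 0 < √(1 + x) := Real.sqrt_pos.2 (by linarith [hx.1])
    have hss : √(1 + x) ^ 2 = 1 + x := Real.sq_sqrt (by linarith [hx.1])
    rw [show 1 - x ^ 2 = (1 + x) * (1 - x) by ring, Real.sqrt_mul (by linarith [hx.1]), hf3]
    field_simp
    rw [hss]
  have L := (BB_lim evL uu_limL vv_limL ZZ_limL ((toL cf.continuousOn).congr' (evL.mono qf)) (toL c2.continuousOn)
    ((toL c3.continuousOn).congr' (evL.mono q3))).const_mul 4
  have R := (BB_lim evR uu_limR vv_limR ZZ_limR ((toR cf.continuousOn).congr' (evR.mono qf)) (toR c2.continuousOn)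
    ((toR c3.continuousOn).congr' (evR.mono q3))).const_mul 4
  have hnn : ∀ x ∈ Ioo (-1:ℝ) 1, 0 ≤ uu x * psi x := fun x hx => mul_nonneg (uu_nonneg x) (psi_inner hx).2
  have hint : IntegrableOn (fun x => uu x * psi x) (Ioc (-1) 1) := by
    have hc : ContinuousOn (extendFrom (Ioo (-1) 1) (fun x => 4 * BB fL f2 f3 x)) (Icc (-1) 1) :=
      continuousOn_Icc_extendFrom_Ioo (fun x hx => (hd x hx).continuousAt.continuousWithinAt) L R
    refine intervalIntegral.integrableOn_deriv_of_nonneg hc ?_ hnn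
    intro x hx
    refine (hd x hx).congr_of_eventuallyEq ?_
    filter_upwards [isOpen_Ioo.mem_nhds hx] with z hz
    refine extendFrom_eq (subset_closure hz) ?_
    exact (hd z hz).continuousAt.continuousWithinAt.tendsto
  have hii : IntervalIntegrable (fun x => uu x * psi x) volume (-1) 1 :=
    (intervalIntegrable_iff_integrableOn_Ioc_of_le (by norm_num)).2 hint
  have hI := intervalIntegral.integral_eq_sub_of_hasDerivAt_of_tendsto (by norm_num) hd hii L R
  rw [← ofReal_integral_eq_lintegral_ofReal (hint.mono_set Ioo_subset_Ioc_self)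
    ((ae_restrict_iff' measurableSet_Ioo).2 (Eventually.of_forall hnn)), ← integral_Ioc_eq_integral_Ioo,
    ← intervalIntegral.integral_of_le (by norm_num), hI]
  congr 1
  rw [hf2]
  norm_num
  ring

lemma HH_val {r : ℝ} (hr : r ∈ Ioo (0:ℝ) 1) : HH r = 8 * √2 * π * ellipticK r := by
  obtain ⟨A, hA⟩ := HH_K
  have hsub : Ioo (0:ℝ) 1 ⊆ Ioo (-1) 1 := Ioo_subset_Ioo_left (by norm_num)
  have hA0 : 0 ≤ A := by
    have hh : (1/2:ℝ) ∈ Ioo (0:ℝ) 1 := by norm_num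
    have h1 := (HH_lint (hsub hh)).2
    rw [hA _ hh] at h1
    exact nonneg_of_mul_nonneg_left h1 (K_pos (hsub hh))
  have h1 : ∫⁻ r in Ioo (0:ℝ) 1, E (r * HH r) = E A := by
    rw [← mul_one (E A), ← rK_lint, ← lintegral_const_mul' _ _ ENNReal.ofReal_ne_top]
    refine setLIntegral_congr_fun measurableSet_Ioo fun r hr => ?_
    rw [← ENNReal.ofReal_mul hA0, hA r hr]
    congr 1; ring
  have h2 : ∫⁻ r in Ioo (0:ℝ) 1, E (r * HH r) = E (8 * √2 * π) := by
    rw [← upsi]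
    have e1 : ∫⁻ r in Ioo (0:ℝ) 1, E (r * HH r) = ∫⁻ r in Ioo (0:ℝ) 1, ∫⁻ x in Ioo (-1:ℝ) 1, E (r * (uu x * gg r x)) := by
      refine setLIntegral_congr_fun measurableSet_Ioo fun r hr => ?_
      rw [ENNReal.ofReal_mul hr.1.le, (HH_lint (hsub hr)).1, ← lintegral_const_mul' _ _ ENNReal.ofReal_ne_top]
      refine lintegral_congr fun x => ?_
      rw [← ENNReal.ofReal_mul hr.1.le]
    rw [e1, lint_swap (fun r x => E (r * (uu x * gg r x)))]
    · refine setLIntegral_congr_fun measurableSet_Ioo fun x hx => ?_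
      rw [ENNReal.ofReal_mul (uu_nonneg x), ← (psi_inner hx).1, ← lintegral_const_mul' _ _ ENNReal.ofReal_ne_top]
      refine lintegral_congr fun r => ?_
      rw [← ENNReal.ofReal_mul (uu_nonneg x)]
      congr 1; ring
    · exact (measurable_fst.mul ((uu_meas.comp measurable_snd).mul gg_meas)).ennreal_ofReal
  rw [hA r hr, E_inj hA0 (by positivity) (h1.symm.trans h2)]

lemma y_g {x : ℝ} (hx : x ∈ Ioo (-1:ℝ) 1) :
    E (yf x) = ∫⁻ σ in Ioo (0:ℝ) 1, E (8 * (1 - σ ^ 2) * gg (σ ^ 4) (-x)) := by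
  have hS : ∀ σ, SS (σ ^ 4) (-x) = √(yS x σ) := by
    intro σ; unfold SS yS; congr 1; ring
  have hc1 : Continuous (fun σ => 8 * (1 - σ ^ 2) * gg (σ ^ 4) (-x)) := by
    have := yS_cont hx.1 (fun σ => 8 * (1 - σ ^ 2) * (1 - (σ ^ 4) ^ 2)) (by fun_prop) 3
    refine this.congr fun σ => ?_
    unfold gg; rw [hS]; ring
  have hc2 : Continuous (fun σ => 4 * (1 + σ ^ 2) / √(yS x σ)) := by
    have := (yS_cont hx.1 (fun σ => 4 * (1 + σ ^ 2)) (by fun_prop) 1)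
    simp only [pow_one] at this
    exact this
  rw [← ofReal_integral_cont zero_le_one hc1.continuousOn]
  · congr 1
    have i1 := hc1.intervalIntegrable (μ := volume) 0 1
    have i2 := hc2.intervalIntegrable (μ := volume) 0 1
    have key : ∫ σ in (0:ℝ)..1, (8 * (1 - σ ^ 2) * gg (σ ^ 4) (-x) - 4 * (1 + σ ^ 2) / √(yS x σ)) = 0 := by
      rw [intervalIntegral.integral_eq_sub_of_hasDerivAt (f := fun σ => 4 * ((σ - σ ^ 3) / √(yS x σ))) _ (i1.sub i2)]
      · norm_num
      · intro σ _
        have h := sqrt_yS_ne hx.1 σ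
        have hd := sqrt_yS_deriv' hx.1 σ
        have h3 : √(yS x σ) ^ 2 = 1 + 2 * σ ^ 4 * x + σ ^ 8 := Real.sq_sqrt (yS_pos hx.1 σ).le
        refine ((((hasDerivAt_id σ).fun_sub (hasDerivAt_pow 3 σ)).fun_div hd h).const_mul 4).congr_deriv ?_
        unfold gg
        rw [hS]
        push_cast
        simp only [id]
        field_simp
        simp only [h3]
        ring
    rw [intervalIntegral.integral_sub i1 i2] at key
    unfold yf
    linarith
  · intro σ hσ
    unfold gg
    rw [hS]
    have h2 : σ ^ 2 ≤ 1 := pow_le_one₀ hσ.1 hσ.2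
    have h8 : (σ ^ 4) ^ 2 ≤ 1 := pow_le_one₀ (by positivity) (pow_le_one₀ hσ.1 hσ.2)
    have : 0 ≤ 1 - σ ^ 2 := by linarith
    have : 0 ≤ 1 - (σ ^ 4) ^ 2 := by linarith
    positivity

lemma partC : ∫⁻ x in Ioo (-1:ℝ) 1, E (yf x ^ 2 * yf (-x)) = E (64 * √2 * π) * de := by
  have hsub : Ioo (0:ℝ) 1 ⊆ Ioo (-1) 1 := Ioo_subset_Ioo_left (by norm_num)
  have e1 : ∫⁻ x in Ioo (-1:ℝ) 1, E (yf x ^ 2 * yf (-x)) =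
      ∫⁻ x in Ioo (-1:ℝ) 1, ∫⁻ σ in Ioo (0:ℝ) 1, E (uu x * (8 * (1 - σ ^ 2) * gg (σ ^ 4) (-x))) := by
    refine setLIntegral_congr_fun measurableSet_Ioo fun x hx => ?_
    rw [show yf x ^ 2 * yf (-x) = uu x * yf x by unfold uu; ring, ENNReal.ofReal_mul (uu_nonneg x), y_g hx,
      ← lintegral_const_mul' _ _ ENNReal.ofReal_ne_top]
    refine lintegral_congr fun σ => ?_
    rw [← ENNReal.ofReal_mul (uu_nonneg x)]
  rw [e1, lint_swap (fun x σ => E (uu x * (8 * (1 - σ ^ 2) * gg (σ ^ 4) (-x))))]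
  · unfold de
    rw [← lintegral_const_mul' _ _ ENNReal.ofReal_ne_top]
    refine setLIntegral_congr_fun measurableSet_Ioo fun σ hσ => ?_
    have h4 : σ ^ 4 ∈ Ioo (0:ℝ) 1 := ⟨pow_pos hσ.1 4, pow_lt_one_aux hσ 4 (by norm_num)⟩
    have h2 : 0 ≤ 1 - σ ^ 2 := by linarith [pow_lt_one_aux hσ 2 (by norm_num)]
    have e2 : ∫⁻ x in Ioo (-1:ℝ) 1, E (uu x * (8 * (1 - σ ^ 2) * gg (σ ^ 4) (-x))) =
        ∫⁻ x in Ioo (-1:ℝ) 1, E (uu x * (8 * (1 - σ ^ 2) * gg (σ ^ 4) x)) := by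
      refine (covR measurableSet_Ioo (fun x : ℝ => -x) (fun _ => -1) (fun x : ℝ => -x) ?_ ?_ ?_ ?_ ?_ _ _ ?_)
      · intro x _; exact hasDerivAt_neg x
      · intro x hx; exact ⟨by linarith [hx.2], by linarith [hx.1]⟩
      · intro x hx; exact ⟨by linarith [hx.2], by linarith [hx.1]⟩
      · intro x _; simp
      · intro x _; simp
      · intro x _; simp [uu_neg]
    have e3 : ∫⁻ x in Ioo (-1:ℝ) 1, E (uu x * (8 * (1 - σ ^ 2) * gg (σ ^ 4) x)) = E (8 * (1 - σ ^ 2)) * E (HH (σ ^ 4)) := by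
      rw [(HH_lint (hsub h4)).1, ← lintegral_const_mul' _ _ ENNReal.ofReal_ne_top]
      refine lintegral_congr fun x => ?_
      rw [← ENNReal.ofReal_mul (by positivity)]
      congr 1; ring
    rw [e2, e3, HH_val h4, ← ENNReal.ofReal_mul (by positivity), ← ENNReal.ofReal_mul h2, ← ENNReal.ofReal_mul (by positivity)]
    congr 1; ring
  · have hg : Measurable (fun p : ℝ × ℝ => gg (p.2 ^ 4) (-p.1)) :=
      gg_meas.comp ((measurable_snd.pow_const 4).prodMk measurable_fst.neg)
    have : Measurable (fun p : ℝ × ℝ => uu p.1 * (8 * (1 - p.2 ^ 2) * gg (p.2 ^ 4) (-p.1))) :=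
      (uu_meas.comp measurable_fst).mul ((by fun_prop : Measurable fun p : ℝ × ℝ => 8 * (1 - p.2 ^ 2)).mul hg)
    exact this.ennreal_ofReal

lemma target_lint : ∫⁻ t in Ioo (0:ℝ) 1, E (4 * ((1-t) * (ellipticK (√(1-t)))^2 * ellipticK (√t) / (1+t) ^ ((3:ℝ)/2))) =
    E ((Real.Gamma (1/8) * Real.Gamma (3/8))^2 / 24) := by
  have h := partA.symm.trans partC
  rw [de_val, ← ENNReal.ofReal_mul (by positivity)] at h
  have h2 : (64 * √2 * π * ((Real.Gamma (1 / 8) * Real.Gamma (3 / 8)) ^ 2 / (96 * π))) =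
      16 * √2 * ((Real.Gamma (1/8) * Real.Gamma (3/8))^2 / 24) := by
    have := Real.pi_pos.ne'
    field_simp
    ring
  rw [h2, ENNReal.ofReal_mul (p := 16 * √2) (by positivity)] at h
  exact (ENNReal.mul_right_inj (ENNReal.ofReal_pos.2 (by positivity)).ne' ENNReal.ofReal_ne_top).1 h

theorem stmt_8 :
    4 * ∫ t in (0:ℝ)..1,
        (1-t) * (ellipticK (Real.sqrt (1-t)))^2 * ellipticK (Real.sqrt t)
          / (1+t) ^ ((3:ℝ)/2)
      = (Real.Gamma (1/8) * Real.Gamma (3/8))^2 / 24 := by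
  rw [← intervalIntegral.integral_const_mul, intervalIntegral.integral_of_le zero_le_one, integral_Ioc_eq_integral_Ioo,
    integral_eq_lintegral_of_nonneg_ae, target_lint, ENNReal.toReal_ofReal (by positivity)]
  · refine (ae_restrict_iff' measurableSet_Ioo).2 (Eventually.of_forall fun t ht => ?_)
    have h1 : 0 ≤ 1 - t := by linarith [ht.2]
    have h2 : 0 ≤ 1 + t := by linarith [ht.1]
    have h3 := K_nonneg (√t)
    simp only [Pi.zero_apply]
    positivity
  · have h1 : Measurable fun t : ℝ => ellipticK (√(1 - t)) := K_meas.comp (by fun_prop)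
    have h2 : Measurable fun t : ℝ => ellipticK (√t) := K_meas.comp (by fun_prop)
    exact Measurable.aestronglyMeasurable (by fun_prop)
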